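/- Let X be a compact subset of ℝ, c : X × X → (−∞,+∞] lower semi-continuous and bounded from below, and let F₁, F₂ be admissible entropy functions with (F₁)'_∞ > 0 and F₂ superlinear. Let μ₁, μ₂ ∈ ℳ(X) be such that the martingale optimal entropy transport problem is feasible, i.e. there exists γ ∈ ℳ_M(X²) with Σ_{i=1}^2 ℱ_i(γ_i|μ_i) + ∫_{X×X} c dγ < ∞. Then ℰ_M(μ₁,μ₂) = sup_{(φ₁,φ₂)∈Λ_M} Σ_{i=1}^2 ∫_X F_i°(φ_i) dμ_i. -/

import Mathlib

open MeasureTheory Filter Set Topology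
open scoped ENNReal NNReal BoundedContinuousFunction

noncomputable section

/-- The "positive part" of an extended real number, as an element of `ℝ≥0∞`. -/
def posE (a : EReal) : ℝ≥0∞ := if a = ⊤ then ⊤ else ENNReal.ofReal a.toReal

/-- Integral of an `EReal`-valued function: positive part minus negative part
(in `EReal`, so that it is always defined). -/
def eIntegral {α : Type*} [MeasurableSpace α] (μ : Measure α) (f : α → EReal) : EReal :=
  ((∫⁻ x, posE (f x) ∂μ : ℝ≥0∞) : EReal) - ((∫⁻ x, posE (-(f x)) ∂μ : ℝ≥0∞) : EReal)

/-- The recession constant `lim_{s→∞} G(s)/s` (as a `limsup`, which coincides with the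
limit for convex functions). -/
def recessionOf (G : ℝ → ℝ≥0∞) : ℝ≥0∞ :=
  Filter.limsup (fun s : ℝ => G s / ENNReal.ofReal s) Filter.atTop

/-- An admissible entropy function: a convex, lower semicontinuous function
`F : [0,∞) → [0,∞]` which is finite at some positive point. -/
structure EntropyFn where
  F : ℝ → ℝ≥0∞
  convex' : ∀ a ∈ Ici (0:ℝ), ∀ b ∈ Ici (0:ℝ), ∀ t : ℝ, 0 ≤ t → t ≤ 1 →
    F (t * a + (1 - t) * b) ≤ ENNReal.ofReal t * F a + ENNReal.ofReal (1 - t) * F b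
  lsc : LowerSemicontinuousOn F (Ici (0:ℝ))
  dom : ∃ s : ℝ, 0 < s ∧ F s ≠ ∞

namespace EntropyFn

/-- The recession constant `F'_∞ = lim_{s→∞} F(s)/s`. -/
def recC (F : EntropyFn) : ℝ≥0∞ := recessionOf F.F

/-- `F` is superlinear if `F'_∞ = ∞`. -/
def Superlinear (F : EntropyFn) : Prop := F.recC = ∞

/-- `F°(φ) := inf_{s ≥ 0} (φ·s + F(s))`, extended to `EReal` arguments. -/
def circ (F : EntropyFn) (φ : EReal) : EReal :=
  ⨅ s : Ici (0:ℝ), φ * ((s : ℝ) : EReal) + ((F.F (s : ℝ) : ℝ≥0∞) : EReal)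

/-- The (interior of the) domain of `F°` is taken inside the set where `F°` is not `-∞`. -/
def circDom (F : EntropyFn) : Set ℝ := {φ : ℝ | F.circ (φ : EReal) ≠ ⊥}

/-- The reverse entropy function `R(r) = r·F(1/r)` for `r > 0`, with `R(0) = F'_∞`. -/
def revF (F : EntropyFn) (r : ℝ) : ℝ≥0∞ :=
  if 0 < r then ENNReal.ofReal r * F.F (1 / r) else F.recC

/-- The Legendre conjugate `R*(ψ) = sup_{s ≥ 0} (s·ψ − R(s))` of the reverse function. -/
def revConj (F : EntropyFn) (ψ : ℝ) : EReal :=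
  ⨆ s : Ici (0:ℝ), (((s : ℝ) * ψ : ℝ) : EReal) - ((F.revF (s : ℝ) : ℝ≥0∞) : EReal)

end EntropyFn

/-- The entropy functional `ℱ(γ|μ) = ∫ F(dγ/dμ) dμ + F'_∞ · γ^⊥(X)`, where
`γ = (dγ/dμ)·μ + γ^⊥` is the Lebesgue decomposition of `γ` with respect to `μ`. -/
def entF {X : Type*} [MeasurableSpace X] (F : EntropyFn) (γ μ : Measure X) : ℝ≥0∞ :=
  (∫⁻ x, F.F ((γ.rnDeriv μ x).toReal) ∂μ) + F.recC * (γ.singularPart μ) Set.univ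

/-- The reverse entropy functional `ℛ(μ|γ) = ∫ R(dμ/dγ) dγ + R'_∞ · μ^⊥(X)`. -/
def revEntF {X : Type*} [MeasurableSpace X] (F : EntropyFn) (μ γ : Measure X) : ℝ≥0∞ :=
  (∫⁻ x, F.revF ((μ.rnDeriv γ x).toReal) ∂γ) + recessionOf F.revF * (μ.singularPart γ) Set.univ

section WOET

variable {X₁ X₂ : Type*} [MeasurableSpace X₁] [MeasurableSpace X₂]

/-- The weak entropy-transport cost
`ℰ_C(γ|μ₁,μ₂) = ℱ₁(γ₁|μ₁) + ℱ₂(γ₂|μ₂) + ∫ C(x₁, γ_{x₁}) dγ₁(x₁)`. -/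
def wCost [StandardBorelSpace X₂] [Nonempty X₂]
    (C : X₁ → ProbabilityMeasure X₂ → EReal) (F₁ F₂ : EntropyFn)
    (μ₁ : Measure X₁) (μ₂ : Measure X₂)
    (γ : Measure (X₁ × X₂)) (hγ : IsFiniteMeasure γ) : EReal :=
  haveI := hγ
  ((entF F₁ γ.fst μ₁ : ℝ≥0∞) : EReal) + ((entF F₂ γ.snd μ₂ : ℝ≥0∞) : EReal) +
    eIntegral γ.fst (fun x₁ => C x₁ ⟨γ.condKernel x₁, inferInstance⟩)

/-- The weak optimal entropy-transport value `ℰ_C(μ₁,μ₂)`. -/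
def wOpt [StandardBorelSpace X₂] [Nonempty X₂]
    (C : X₁ → ProbabilityMeasure X₂ → EReal) (F₁ F₂ : EntropyFn)
    (μ₁ : Measure X₁) (μ₂ : Measure X₂) : EReal :=
  sInf { e : EReal | ∃ (γ : Measure (X₁ × X₂)) (hγ : IsFiniteMeasure γ),
    e = wCost C F₁ F₂ μ₁ μ₂ γ hγ }

variable [TopologicalSpace X₁] [TopologicalSpace X₂]

/-- The dual feasible set `Λ`. -/
def lamSet (C : X₁ → ProbabilityMeasure X₂ → EReal) (F₁ F₂ : EntropyFn) :
    Set ((X₁ →ᵇ ℝ) × (X₂ →ᵇ ℝ)) :=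
  { φ | (∀ x, φ.1 x ∈ interior F₁.circDom) ∧ (∀ x, φ.2 x ∈ interior F₂.circDom) ∧
      ∀ (x₁ : X₁) (p : ProbabilityMeasure X₂),
        ((φ.1 x₁ + ∫ x₂, φ.2 x₂ ∂(p : Measure X₂) : ℝ) : EReal) ≤ C x₁ p }

/-- The dual feasible set `Λ_R`. -/
def lamRSet (C : X₁ → ProbabilityMeasure X₂ → EReal) (F₁ F₂ : EntropyFn) :
    Set ((X₁ →ᵇ ℝ) × (X₂ →ᵇ ℝ)) :=
  { φ | (∃ b : ℝ, ((b : ℝ) : EReal) < ((F₁.F 0 : ℝ≥0∞) : EReal) ∧ ∀ x, φ.1 x ≤ b) ∧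
        (∃ b : ℝ, ((b : ℝ) : EReal) < ((F₂.F 0 : ℝ≥0∞) : EReal) ∧ ∀ x, φ.2 x ≤ b) ∧
        ∀ (x₁ : X₁) (p : ProbabilityMeasure X₂),
          F₁.revConj (φ.1 x₁) + eIntegral (p : Measure X₂) (fun x₂ => F₂.revConj (φ.2 x₂))
            ≤ C x₁ p }

/-- The dual feasible set `Λ_ET` (constraints tested against all pairs of nonnegative finite
measures; on all other signed measures `ET = +∞`, so those constraints are vacuous). -/
def lamETSet [StandardBorelSpace X₂] [Nonempty X₂]
    (C : X₁ → ProbabilityMeasure X₂ → EReal) (F₁ F₂ : EntropyFn) :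
    Set ((X₁ →ᵇ ℝ) × (X₂ →ᵇ ℝ)) :=
  { φ | ∀ (μ₁ : Measure X₁) (μ₂ : Measure X₂), IsFiniteMeasure μ₁ → IsFiniteMeasure μ₂ →
      (((∫ x, φ.1 x ∂μ₁) + ∫ x, φ.2 x ∂μ₂ : ℝ) : EReal) ≤ wOpt C F₁ F₂ μ₁ μ₂ }

/-- The set `Λ_ET^<`. -/
def lamETltSet [StandardBorelSpace X₂] [Nonempty X₂]
    (C : X₁ → ProbabilityMeasure X₂ → EReal) (F₁ F₂ : EntropyFn) :
    Set ((X₁ →ᵇ ℝ) × (X₂ →ᵇ ℝ)) :=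
  { φ ∈ lamETSet C F₁ F₂ |
      (∃ b : ℝ, ((b : ℝ) : EReal) < ((F₁.F 0 : ℝ≥0∞) : EReal) ∧ ∀ x, φ.1 x ≤ b) ∧
      (∃ b : ℝ, ((b : ℝ) : EReal) < ((F₂.F 0 : ℝ≥0∞) : EReal) ∧ ∀ x, φ.2 x ≤ b) }

/-- `R_C φ(x₁) := inf_{p ∈ 𝒫(X₂)} (C(x₁,p) + ∫ φ dp)`. -/
def RCfun (C : X₁ → ProbabilityMeasure X₂ → EReal) (φ : X₂ →ᵇ ℝ) (x₁ : X₁) : EReal :=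
  ⨅ p : ProbabilityMeasure X₂, C x₁ p + ((∫ x₂, φ x₂ ∂(p : Measure X₂) : ℝ) : EReal)

/-- Property (BM) of an admissible entropy function on a space `X`. -/
def HasBM (X : Type*) [TopologicalSpace X] [MeasurableSpace X] (F : EntropyFn) : Prop :=
  ∀ ψ : X →ᵇ ℝ, (∃ b : ℝ, ((b : ℝ) : EReal) < ((F.F 0 : ℝ≥0∞) : EReal) ∧ ∀ x, ψ x ≤ b) →
    ∃ s : X → ℝ, Measurable s ∧ (∃ M : ℝ, ∀ x, |s x| ≤ M) ∧ (∀ x, 0 < s x) ∧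
      ∀ x, ((F.revF (s x) : ℝ≥0∞) : EReal) + F.revConj (ψ x) = ((s x * ψ x : ℝ) : EReal)

end WOET

/-- The functional `ET` extended to pairs of finite signed measures:
it equals `ℰ_C(μ₁,μ₂)` when both arguments are (induced by) nonnegative finite measures,
and `+∞` otherwise. -/
def ETsgn {X₁ X₂ : Type*} [MeasurableSpace X₁] [MeasurableSpace X₂]
    [StandardBorelSpace X₂] [Nonempty X₂]
    (C : X₁ → ProbabilityMeasure X₂ → EReal) (F₁ F₂ : EntropyFn)
    (ν₁ : SignedMeasure X₁) (ν₂ : SignedMeasure X₂) : EReal :=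
  sInf { e : EReal | ∃ (μ₁ : Measure X₁) (h₁ : IsFiniteMeasure μ₁)
      (μ₂ : Measure X₂) (h₂ : IsFiniteMeasure μ₂),
      ν₁ = @Measure.toSignedMeasure X₁ _ μ₁ h₁ ∧ ν₂ = @Measure.toSignedMeasure X₂ _ μ₂ h₂ ∧
      e = wOpt C F₁ F₂ μ₁ μ₂ }

section Martingale

variable {X : Set ℝ}

/-- The martingale condition for a finite measure on `X × X`:
`∫ y dγ_x(y) = x` for `γ₁`-a.e. `x`. -/
def martCond [StandardBorelSpace ↥X] [Nonempty ↥X]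
    (γ : Measure (↥X × ↥X)) (hγ : IsFiniteMeasure γ) : Prop :=
  haveI := hγ
  ∀ᵐ x ∂γ.fst, (∫ y, (y : ℝ) ∂(γ.condKernel x)) = (x : ℝ)

/-- The martingale optimal entropy transport value `ℰ_M(μ₁,μ₂)` (with an `EReal`-valued
cost `c`). -/
def eMart [StandardBorelSpace ↥X] [Nonempty ↥X]
    (c : ↥X → ↥X → EReal) (F₁ F₂ : EntropyFn) (μ₁ μ₂ : Measure ↥X) : EReal :=
  sInf { e : EReal | ∃ (γ : Measure (↥X × ↥X)) (hγ : IsFiniteMeasure γ), martCond γ hγ ∧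
    e = ((entF F₁ γ.fst μ₁ : ℝ≥0∞) : EReal) + ((entF F₂ γ.snd μ₂ : ℝ≥0∞) : EReal) +
        eIntegral γ (fun q => c q.1 q.2) }

/-- The martingale optimal entropy transport value `ℰ_M(μ₁,μ₂)` (with a `[0,∞]`-valued
cost `c`). -/
def eMartNN [StandardBorelSpace ↥X] [Nonempty ↥X]
    (c : ↥X → ↥X → ℝ≥0∞) (F₁ F₂ : EntropyFn) (μ₁ μ₂ : Measure ↥X) : EReal :=
  sInf { e : EReal | ∃ (γ : Measure (↥X × ↥X)) (hγ : IsFiniteMeasure γ), martCond γ hγ ∧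
    e = ((entF F₁ γ.fst μ₁ + entF F₂ γ.snd μ₂ + ∫⁻ q, c q.1 q.2 ∂γ : ℝ≥0∞) : EReal) }

/-- The dual feasible set `Λ_M` for the martingale problem. -/
def lamM (c : ↥X → ↥X → EReal) (F₁ F₂ : EntropyFn) : Set ((↥X →ᵇ ℝ) × (↥X →ᵇ ℝ)) :=
  { φ | (∀ x, φ.1 x ∈ interior F₁.circDom) ∧ (∀ x, φ.2 x ∈ interior F₂.circDom) ∧
      ∃ h : ↥X →ᵇ ℝ, ∀ x₁ x₂ : ↥X,
        ((φ.1 x₁ + φ.2 x₂ + h x₁ * ((x₂ : ℝ) - (x₁ : ℝ)) : ℝ) : EReal) ≤ c x₁ x₂ }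

/-- The perspective function `r·F(θ/r)` with the convention `r·F(θ/r) = θ·F'_∞` for `r = 0`. -/
def perspFn (F : EntropyFn) (r θ : ℝ) : ℝ≥0∞ :=
  if r = 0 then ENNReal.ofReal θ * F.recC else ENNReal.ofReal r * F.F (θ / r)

/-- The homogeneous marginal perspective cost `H(x₁,r₁;x₂,r₂)` (the dependence on
`(x₁,x₂)` is through the value `c = c(x₁,x₂)`). -/
def Hcost (F₁ F₂ : EntropyFn) (c : ℝ≥0∞) (r₁ r₂ : ℝ) : ℝ≥0∞ :=
  if c ≠ ∞ then
    ⨅ θ : Ioi (0:ℝ), perspFn F₁ r₁ (θ : ℝ) + perspFn F₂ r₂ (θ : ℝ) + ENNReal.ofReal (θ : ℝ) * c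
  else F₁.F 0 * ENNReal.ofReal r₁ + F₂.F 0 * ENNReal.ofReal r₂

/-- The functional `ℋ(μ₁,μ₂|γ)`. -/
def hMargFun (F₁ F₂ : EntropyFn) (c : ↥X → ↥X → ℝ≥0∞) (μ₁ μ₂ : Measure ↥X)
    (γ : Measure (↥X × ↥X)) : ℝ≥0∞ :=
  (∫⁻ q, Hcost F₁ F₂ (c q.1 q.2) ((μ₁.rnDeriv γ.fst q.1).toReal)
      ((μ₂.rnDeriv γ.snd q.2).toReal) ∂γ)
    + F₁.F 0 * (μ₁.singularPart γ.fst) Set.univ + F₂.F 0 * (μ₂.singularPart γ.snd) Set.univ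

/-- The functional `ℛ(μ₁,μ₂|γ)`. -/
def rMargFun (F₁ F₂ : EntropyFn) (c : ↥X → ↥X → ℝ≥0∞) (μ₁ μ₂ : Measure ↥X)
    (γ : Measure (↥X × ↥X)) : ℝ≥0∞ :=
  revEntF F₁ μ₁ γ.fst + revEntF F₂ μ₂ γ.snd + ∫⁻ q, c q.1 q.2 ∂γ

/-- The first `p`-homogeneous marginal of a measure on `Y × Y`, `Y = X × [0,∞)`. -/
def hMarg1 (p : ℝ) (α : Measure ((↥X × ℝ≥0) × (↥X × ℝ≥0))) : Measure ↥X :=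
  Measure.map (fun q => q.1.1) (α.withDensity fun q => (q.1.2 : ℝ≥0∞) ^ p)

/-- The second `p`-homogeneous marginal of a measure on `Y × Y`, `Y = X × [0,∞)`. -/
def hMarg2 (p : ℝ) (α : Measure ((↥X × ℝ≥0) × (↥X × ℝ≥0))) : Measure ↥X :=
  Measure.map (fun q => q.2.1) (α.withDensity fun q => (q.2.2 : ℝ≥0∞) ^ p)

/-- Membership in the homogeneous constraint set `ℋ^p_{M,≤}(μ₁,μ₂)`. -/
def memHpM (p : ℝ) (μ₁ μ₂ : Measure ↥X) (α : Measure ((↥X × ℝ≥0) × (↥X × ℝ≥0))) : Prop :=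
  IsFiniteMeasure α ∧ (∫⁻ q, (q.1.2 : ℝ≥0∞) ^ p + (q.2.2 : ℝ≥0∞) ^ p ∂α) ≠ ∞ ∧
    hMarg1 p α ≤ μ₁ ∧ hMarg2 p α ≤ μ₂ ∧
    ∀ h : ↥X →ᵇ ℝ, (∫ q, h q.1.1 * ((q.2.1 : ℝ) - (q.1.1 : ℝ)) ∂α) = 0

end Martingale

namespace EntropyFn

/-- real version of `F°` -/
def G (F : EntropyFn) (t : ℝ) : ℝ := (F.circ (t : EReal)).toReal

/-- interior of the domain -/
def I (F : EntropyFn) : Set ℝ := interior F.circDom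

lemma circ_ne_top (F : EntropyFn) (t : ℝ) : F.circ (t : EReal) ≠ ⊤ := by
  obtain ⟨s, hs, hF⟩ := F.dom
  have h : F.circ (t : EReal) ≤ (t : EReal) * ((s : ℝ) : EReal) + ((F.F s : ℝ≥0∞) : EReal) :=
    iInf_le (fun s : Ici (0:ℝ) => (t : EReal) * ((s : ℝ) : EReal) + ((F.F (s : ℝ) : ℝ≥0∞) : EReal))
      ⟨s, hs.le⟩
  refine ne_top_of_le_ne_top ?_ h
  rw [← EReal.coe_mul, ← ENNReal.ofReal_toReal hF, EReal.coe_ennreal_ofReal, ← EReal.coe_add]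
  exact EReal.coe_ne_top _

lemma circ_eq (F : EntropyFn) {t : ℝ} (ht : t ∈ F.circDom) : F.circ (t : EReal) = (F.G t : EReal) :=
  (EReal.coe_toReal (F.circ_ne_top t) ht).symm

lemma aux_le (m t s : ℝ) (a : ℝ≥0∞) :
    ((m : EReal) ≤ (t : EReal) * (s : EReal) + (a : EReal)) ↔ ENNReal.ofReal (m - t * s) ≤ a := by
  rcases eq_or_ne a ⊤ with rfl | ha
  · simp [← EReal.coe_mul]
  · lift a to ℝ≥0 using ha
    rw [← EReal.coe_mul, ENNReal.ofReal_le_iff_le_toReal (by simp)]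
    have : (((a : ℝ≥0∞)) : EReal) = ((a : ℝ) : EReal) := rfl
    rw [this, ← EReal.coe_add, EReal.coe_le_coe_iff, ENNReal.coe_toReal]
    constructor <;> intro h <;> linarith

lemma G_le (F : EntropyFn) {t : ℝ} (ht : t ∈ F.circDom) {s : ℝ} (hs : 0 ≤ s) :
    ENNReal.ofReal (F.G t - t * s) ≤ F.F s := by
  rw [← aux_le, ← F.circ_eq ht]
  exact iInf_le (fun s : Ici (0:ℝ) => (t : EReal) * ((s : ℝ) : EReal)
    + ((F.F (s : ℝ) : ℝ≥0∞) : EReal)) ⟨s, hs⟩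

lemma le_G (F : EntropyFn) {t m : ℝ} (h : ∀ s, 0 ≤ s → ENNReal.ofReal (m - t * s) ≤ F.F s) :
    t ∈ F.circDom ∧ m ≤ F.G t := by
  have h1 : (m : EReal) ≤ F.circ (t : EReal) := by
    refine le_iInf fun s => ?_
    rw [aux_le]
    exact h s s.2
  have h2 : t ∈ F.circDom := by
    intro h3
    rw [h3] at h1
    simp at h1
  refine ⟨h2, ?_⟩
  rw [F.circ_eq h2] at h1
  exact_mod_cast h1

lemma ofReal_comb {a b α β : ℝ} {x : ℝ≥0∞} (hα : 0 ≤ α) (hβ : 0 ≤ β) (hab : α + β = 1)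
    (ha : ENNReal.ofReal a ≤ x) (hb : ENNReal.ofReal b ≤ x) :
    ENNReal.ofReal (α * a + β * b) ≤ x := by
  rcases eq_or_ne x ⊤ with rfl | hx
  · simp
  · rw [ENNReal.ofReal_le_iff_le_toReal hx] at *
    have h1 := mul_le_mul_of_nonneg_left ha hα
    have h2 := mul_le_mul_of_nonneg_left hb hβ
    have h3 : α * x.toReal + β * x.toReal = x.toReal := by rw [← add_mul, hab, one_mul]
    linarith

lemma concave_aux (F : EntropyFn) {x y : ℝ} (hx : x ∈ F.circDom) (hy : y ∈ F.circDom) {α β : ℝ}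
    (hα : 0 ≤ α) (hβ : 0 ≤ β) (hab : α + β = 1) :
    α * x + β * y ∈ F.circDom ∧ α * F.G x + β * F.G y ≤ F.G (α * x + β * y) := by
  apply F.le_G
  intro s hs
  have := ofReal_comb hα hβ hab (F.G_le hx hs) (F.G_le hy hs)
  convert this using 2
  ring

lemma convex_circDom (F : EntropyFn) : Convex ℝ F.circDom := by
  intro x hx y hy α β hα hβ hab
  exact (F.concave_aux hx hy hα hβ hab).1

lemma concave_G (F : EntropyFn) : ConcaveOn ℝ F.circDom F.G :=
  ⟨F.convex_circDom, fun _ hx _ hy _ _ hα hβ hab => (F.concave_aux hx hy hα hβ hab).2⟩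

lemma isOpen_I (F : EntropyFn) : IsOpen F.I := isOpen_interior
lemma convex_I (F : EntropyFn) : Convex ℝ F.I := F.convex_circDom.interior
lemma I_sub (F : EntropyFn) {t : ℝ} (h : t ∈ F.I) : t ∈ F.circDom := interior_subset h
lemma continuousOn_G (F : EntropyFn) : ContinuousOn F.G F.I := F.concave_G.continuousOn_interior

lemma up (F : EntropyFn) {t t' : ℝ} (ht : t ∈ F.circDom) (h : t ≤ t') :
    t' ∈ F.circDom ∧ F.G t ≤ F.G t' := by
  apply F.le_G
  intro s hs
  refine le_trans (ENNReal.ofReal_le_ofReal ?_) (F.G_le ht hs)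
  nlinarith

lemma mem_I_of_lt (F : EntropyFn) {t t' : ℝ} (ht : t ∈ F.circDom) (h : t < t') : t' ∈ F.I := by
  rw [I, mem_interior]
  exact ⟨Ioi t, fun z hz => (F.up ht (le_of_lt hz)).1, isOpen_Ioi, h⟩

lemma zero_mem (F : EntropyFn) : (0:ℝ) ∈ F.circDom ∧ 0 ≤ F.G 0 := by
  apply F.le_G
  intro s hs
  simp

/-- slopes below the recession constant are in the domain. -/
lemma neg_mem_of_lt_recC (F : EntropyFn) {r : ℝ} (hr : 0 ≤ r) (h : ENNReal.ofReal r < F.recC) :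
    -r ∈ F.circDom := by
  obtain ⟨s0, hs0, hF⟩ := F.dom
  -- pick r' with r < r' < recC
  obtain ⟨r', hr', hr'2⟩ : ∃ r' : ℝ, r < r' ∧ ENNReal.ofReal r' < F.recC := by
    obtain ⟨q, hq1, hq2⟩ := ENNReal.lt_iff_exists_nnreal_btwn.1 h
    refine ⟨q, ?_, ?_⟩
    · rw [ENNReal.ofReal_lt_coe_iff hr] at hq1
      exact hq1
    · simpa using hq2
  have hfreq : ∃ᶠ s : ℝ in atTop, ENNReal.ofReal r' < F.F s / ENNReal.ofReal s := by
    apply Filter.frequently_lt_of_lt_limsup (by isBoundedDefault)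
    exact hr'2
  set f0 := (F.F s0).toReal with hf0
  obtain ⟨s, hs, hs1⟩ := (hfreq.and_eventually
    (eventually_gt_atTop (max s0 ((f0 - r * s0) / (r' - r))))).exists
  have hs2 : s0 < s := lt_of_le_of_lt (le_max_left _ _) hs1
  have hs3 : (f0 - r * s0) / (r' - r) < s := lt_of_le_of_lt (le_max_right _ _) hs1
  rw [div_lt_iff₀ (by linarith)] at hs3
  have hspos : 0 < s := hs0.trans hs2
  have hFs : ENNReal.ofReal (f0 + r * (s - s0)) < F.F s := by
    have h1 : ENNReal.ofReal r' * ENNReal.ofReal s < F.F s := by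
      rw [ENNReal.lt_div_iff_mul_lt] at hs
      · exact hs
      · left; simpa using hspos
      · left; simp
    rw [← ENNReal.ofReal_mul (by linarith)] at h1
    refine lt_of_le_of_lt (ENNReal.ofReal_le_ofReal ?_) h1
    nlinarith
  refine (F.le_G (m := min (f0 - r * s0) (- r * s)) ?_).1
  intro t ht
  rcases le_or_gt t s with hts | hts
  · have : min (f0 - r * s0) (- r * s) - -r * t ≤ 0 := by
      have := min_le_right (f0 - r * s0) (- r * s)
      nlinarith
    rw [ENNReal.ofReal_of_nonpos this]
    exact zero_le
  · by_contra hcon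
    push Not at hcon
    have hFt : F.F t ≠ ⊤ := hcon.ne_top
    have hlt : F.F t < ENNReal.ofReal (f0 + r * (t - s0)) := by
      refine lt_of_lt_of_le hcon (ENNReal.ofReal_le_ofReal ?_)
      have := min_le_left (f0 - r * s0) (- r * s)
      nlinarith
    have hlt' : (F.F t).toReal < f0 + r * (t - s0) := by
      rw [ENNReal.lt_ofReal_iff_toReal_lt hFt] at hlt
      exact hlt
    set θ := (t - s) / (t - s0) with hθ
    have hd : 0 < t - s0 := by linarith
    have hθ0 : 0 ≤ θ := div_nonneg (by linarith) hd.le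
    have hθ1 : θ ≤ 1 := by rw [hθ, div_le_one hd]; linarith
    have hconv := F.convex' s0 hs0.le t ht θ hθ0 hθ1
    have hθm : θ * (t - s0) = t - s := by rw [hθ]; field_simp
    have hse : θ * s0 + (1 - θ) * t = s := by linarith
    rw [hse, ← ENNReal.ofReal_toReal hF, ← ENNReal.ofReal_toReal hFt,
      ← ENNReal.ofReal_mul hθ0, ← ENNReal.ofReal_mul (by linarith),
      ← ENNReal.ofReal_add (by positivity) (mul_nonneg (by linarith) (by positivity))] at hconv
    have := lt_of_lt_of_le hFs hconv
    rw [ENNReal.ofReal_lt_ofReal_iff'] at this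
    have h1 := this.1
    rw [← hf0] at h1
    have h5 : (1 - θ) * (F.F t).toReal ≤ (1-θ) * (f0 + r * (t - s0)) :=
      mul_le_mul_of_nonneg_left hlt'.le (by linarith)
    nlinarith

lemma zero_mem_I (F : EntropyFn) (h : 0 < F.recC) : (0:ℝ) ∈ F.I := by
  obtain ⟨q, hq1, hq2⟩ := ENNReal.lt_iff_exists_nnreal_btwn.1 h
  have : -(q:ℝ) ∈ F.circDom := F.neg_mem_of_lt_recC q.2 (by simpa using hq2)
  refine F.mem_I_of_lt this ?_
  have : 0 < q := by simpa using hq1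
  simpa using this

lemma I_univ (F : EntropyFn) (h : F.Superlinear) (t : ℝ) : t ∈ F.I := by
  have : -(|t| + 1) ∈ F.circDom := F.neg_mem_of_lt_recC (by positivity) (by
    rw [Superlinear] at h; rw [h]; simp)
  exact F.mem_I_of_lt this (by linarith [neg_abs_le t])

/-- the domain lies above minus the recession constant -/
lemma neg_le_recC (F : EntropyFn) {t : ℝ} (ht : t ∈ F.circDom) : ENNReal.ofReal (-t) ≤ F.recC := by
  refine le_of_forall_lt fun a ha => ?_
  have hat : a ≠ ⊤ := ha.ne_top
  rw [ENNReal.lt_ofReal_iff_toReal_lt hat] at ha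
  obtain ⟨b, hb1, hb2⟩ := exists_between ha
  have hb0 : 0 < b := lt_of_le_of_lt ENNReal.toReal_nonneg hb1
  have hab : a < ENNReal.ofReal b := by
    rw [ENNReal.lt_ofReal_iff_toReal_lt hat]; exact hb1
  refine lt_of_lt_of_le hab ?_
  refine Filter.le_limsup_of_frequently_le ?_ (by isBoundedDefault)
  apply Eventually.frequently
  filter_upwards [eventually_gt_atTop (0:ℝ), eventually_gt_atTop (- F.G t / (-t - b))] with s hs hs2
  rw [ENNReal.le_div_iff_mul_le (by left; simpa using hs) (by left; simp),
    ← ENNReal.ofReal_mul hb0.le]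
  refine le_trans (ENNReal.ofReal_le_ofReal ?_) (F.G_le ht hs.le)
  rw [div_lt_iff₀ (by linarith)] at hs2
  nlinarith

/-- Biconjugation. -/
lemma exists_minorant (F : EntropyFn) {s M : ℝ} (hM : 0 ≤ M)
    (h : ENNReal.ofReal M < F.F s) :
    ∃ q ∈ F.circDom, M < F.G q - q * s := by
  set E : Set (ℝ × ℝ) := {p | 0 ≤ p.1 ∧ 0 ≤ p.2 ∧ F.F p.1 ≤ ENNReal.ofReal p.2} with hE
  have hconv : Convex ℝ E := by
    rintro ⟨a, r⟩ ⟨ha, hr, har⟩ ⟨b, r'⟩ ⟨hb, hr', hbr⟩ α β hα hβ hab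
    simp only at ha hr har hb hr' hbr
    refine ⟨by simp; positivity, by simp; positivity, ?_⟩
    have hβ' : β = 1 - α := by linarith
    have := F.convex' a ha b hb α hα (by linarith)
    simp only [Prod.smul_mk, Prod.mk_add_mk, smul_eq_mul]
    rw [hβ']
    refine this.trans ?_
    rw [ENNReal.ofReal_add (by positivity) (by rw [← hβ']; positivity), ENNReal.ofReal_mul hα,
      ENNReal.ofReal_mul (by linarith : 0 ≤ 1 - α)]
    gcongr
  have hclosed : IsClosed E := by
    rw [← isOpen_compl_iff, isOpen_iff_mem_nhds]
    rintro ⟨a, r⟩ hn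
    by_cases ha : 0 ≤ a
    · by_cases hr : 0 ≤ r
      · have hlt : ENNReal.ofReal r < F.F a := by
          by_contra hcon
          push Not at hcon
          exact hn ⟨ha, hr, hcon⟩
        obtain ⟨q, hq1, hq2⟩ := exists_between hlt
        have h1 := F.lsc a ha q hq2
        rw [eventually_nhdsWithin_iff] at h1
        have h2 : ∀ᶠ x in 𝓝 r, ENNReal.ofReal x < q :=
          (ENNReal.continuous_ofReal.tendsto r).eventually_lt_const hq1
        rw [nhds_prod_eq]
        filter_upwards [h1.prod_mk h2] with p hp hpE
        exact absurd (hp.2.trans (hp.1 hpE.1)) (not_lt.2 hpE.2.2)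
      · have : {p : ℝ × ℝ | p.2 < 0} ∈ 𝓝 (a, r) :=
          (isOpen_lt continuous_snd continuous_const).mem_nhds (by simpa using hr)
        filter_upwards [this] with p hp hpE
        exact absurd hpE.2.1 (not_le.2 hp)
    · have : {p : ℝ × ℝ | p.1 < 0} ∈ 𝓝 (a, r) :=
          (isOpen_lt continuous_fst continuous_const).mem_nhds (by simpa using ha)
      filter_upwards [this] with p hp hpE
      exact absurd hpE.1 (not_le.2 hp)
  have hnot : (s, M) ∉ E := fun hc => absurd hc.2.2 (not_le.2 h)
  obtain ⟨f, u, hfu, hfE⟩ := geometric_hahn_banach_point_closed hconv hclosed hnot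
  set α := f (1, 0) with hα
  set β := f (0, 1) with hβ
  have hf : ∀ a r : ℝ, f (a, r) = α * a + β * r := by
    intro a r
    have : ((a, r) : ℝ × ℝ) = a • ((1, 0) : ℝ × ℝ) + r • ((0, 1) : ℝ × ℝ) := by simp
    rw [this, map_add, map_smul, map_smul, smul_eq_mul, smul_eq_mul, mul_comm a, mul_comm r]
  rw [hf] at hfu
  have hE' : ∀ t r : ℝ, 0 ≤ t → 0 ≤ r → F.F t ≤ ENNReal.ofReal r → u < α * t + β * r := by
    intro t r ht hr htr
    rw [← hf]; exact hfE _ ⟨ht, hr, htr⟩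
  obtain ⟨s0, hs0, hF0⟩ := F.dom
  have hβ0 : 0 ≤ β := by
    by_contra hneg
    push Not at hneg
    set r := max (F.F s0).toReal ((u - α * s0) / β) with hr
    have h1 := hE' s0 r hs0.le (le_trans ENNReal.toReal_nonneg (le_max_left _ _)) (by
      rw [ENNReal.le_ofReal_iff_toReal_le hF0
        (le_trans ENNReal.toReal_nonneg (le_max_left _ _))]
      exact le_max_left _ _)
    have h2 : (u - α * s0) / β ≤ r := le_max_right _ _
    rw [div_le_iff_of_neg hneg] at h2
    linarith
  have hmin : ∀ t, 0 ≤ t → F.F t ≠ ⊤ → u < α * t + β * (F.F t).toReal := fun t ht hFt =>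
    hE' t _ ht ENNReal.toReal_nonneg (by rw [ENNReal.ofReal_toReal hFt])
  rcases hβ0.eq_or_lt with hβz | hβp
  · rw [← hβz] at hfu hmin
    -- vertical hyperplane
    set l := (M + 1) / (u - α * s) with hl
    have hd : 0 < u - α * s := by linarith
    have hlpos : 0 < l := by positivity
    have hlm : l * (u - α * s) = M + 1 := by rw [hl]; field_simp
    obtain ⟨h1, h2⟩ := F.le_G (t := l * α) (m := l * u) (by
      intro t ht
      by_cases hFt : F.F t = ⊤
      · rw [hFt]; exact le_top
      · have := hmin t ht hFt
        rw [ENNReal.ofReal_of_nonpos]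
        · exact zero_le
        · nlinarith)
    exact ⟨_, h1, by nlinarith⟩
  · obtain ⟨h1, h2⟩ := F.le_G (t := α / β) (m := u / β) (by
      intro t ht
      by_cases hFt : F.F t = ⊤
      · rw [hFt]; exact le_top
      · have := hmin t ht hFt
        rw [ENNReal.ofReal_le_iff_le_toReal hFt]
        have h3 : u / β - α / β * t = (u - α * t) / β := by ring
        rw [h3, div_le_iff₀ hβp]
        linarith)
    refine ⟨_, h1, lt_of_lt_of_le ?_ (sub_le_sub_right h2 _)⟩
    have h3 : u / β - α / β * s = (u - α * s) / β := by ring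
    rw [h3, lt_div_iff₀ hβp]
    linarith

lemma exists_minorant_I (F : EntropyFn) {s M : ℝ} (hs : 0 ≤ s) (hM : 0 ≤ M)
    (h : ENNReal.ofReal M < F.F s) :
    ∃ q ∈ F.I, M < F.G q - q * s := by
  obtain ⟨q, hq, hlt⟩ := F.exists_minorant hM h
  set d := F.G q - q * s - M with hd
  have hdpos : 0 < d := by linarith
  set ε := d / (2 * (s + 1)) with hε
  have hεp : 0 < ε := by positivity
  have hεm : ε * (s + 1) = d / 2 := by rw [hε]; field_simp
  refine ⟨q + ε, F.mem_I_of_lt hq (by linarith), ?_⟩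
  have := (F.up hq (by linarith : q ≤ q + ε)).2
  nlinarith

lemma measurable_aux (F : EntropyFn) : Measurable (fun s : ℝ => F.F (max s 0)) := by
  have : LowerSemicontinuous (fun s : ℝ => F.F (max s 0)) := by
    intro x y hy
    have h1 := F.lsc (max x 0) (mem_Ici.2 (le_max_right _ _)) y hy
    have h2 : Tendsto (fun s : ℝ => max s 0) (𝓝 x) (𝓝[Ici 0] (max x 0)) := by
      apply tendsto_nhdsWithin_of_tendsto_nhds_of_eventually_within
      · exact (continuous_id.max continuous_const).tendsto x
      · exact Eventually.of_forall fun s => mem_Ici.2 (le_max_right _ _)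
    exact h2.eventually h1
  exact this.measurable

end EntropyFn

namespace EntropyFn

open Classical in
/-- enumeration of a countable dense subset of the domain -/
def qseq (F : EntropyFn) (n : ℕ) : ℝ :=
  if ((Denumerable.ofNat ℚ n : ℚ) : ℝ) ∈ F.I then ((Denumerable.ofNat ℚ n : ℚ) : ℝ) else 0

/-- running maximum -/
def val (F : EntropyFn) : ℕ → ℝ → ℝ
  | 0, _ => F.G 0
  | n + 1, s => max (val F n s) (F.G (F.qseq n) - F.qseq n * s)

open Classical in
/-- running maximiser -/
def sel (F : EntropyFn) : ℕ → ℝ → ℝ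
  | 0, _ => 0
  | n + 1, s => if F.val n s < F.G (F.qseq n) - F.qseq n * s then F.qseq n else sel F n s

lemma qseq_mem (F : EntropyFn) (h0 : (0:ℝ) ∈ F.I) (n : ℕ) : F.qseq n ∈ F.I := by
  unfold qseq; split_ifs with h
  · exact h
  · exact h0

lemma val_eq (F : EntropyFn) (n : ℕ) (s : ℝ) : F.val n s = F.G (F.sel n s) - F.sel n s * s := by
  induction n with
  | zero => simp [val, sel]
  | succ n ih =>
    simp only [val, sel]
    split_ifs with h
    · exact max_eq_right h.le
    · rw [max_eq_left (not_lt.1 h), ih]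

lemma measurable_val (F : EntropyFn) (n : ℕ) : Measurable (F.val n) := by
  induction n with
  | zero => exact measurable_const
  | succ n ih => 
    change Measurable (fun s => max (F.val n s) (F.G (F.qseq n) - F.qseq n * s))
    fun_prop

lemma measurable_sel (F : EntropyFn) (n : ℕ) : Measurable (F.sel n) := by
  classical
  induction n with
  | zero => exact measurable_const
  | succ n ih =>
    refine Measurable.ite (measurableSet_lt (F.measurable_val n) (by fun_prop)) measurable_const ih

lemma sel_range (F : EntropyFn) (h0 : (0:ℝ) ∈ F.I) (n : ℕ) :
    ∃ a ∈ F.I, ∃ b ∈ F.I, ∀ s, F.sel n s ∈ Icc a b := by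
  induction n with
  | zero => exact ⟨0, h0, 0, h0, fun s => by simp [sel]⟩
  | succ n ih =>
    obtain ⟨a, ha, b, hb, h⟩ := ih
    have hq := F.qseq_mem h0 n
    refine ⟨min a (F.qseq n), ?_, max b (F.qseq n), ?_, fun s => ?_⟩
    · rcases min_choice a (F.qseq n) with h | h <;> rw [h] <;> assumption
    · rcases max_choice b (F.qseq n) with h | h <;> rw [h] <;> assumption
    · simp only [sel]
      split_ifs
      · exact ⟨min_le_right _ _, le_max_right _ _⟩
      · exact ⟨(min_le_left _ _).trans (h s).1, (h s).2.trans (le_max_left _ _)⟩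

lemma val_mono (F : EntropyFn) (s : ℝ) : Monotone (fun n => F.val n s) :=
  monotone_nat_of_le_succ fun _ => le_max_left _ _

lemma val_nonneg (F : EntropyFn) (n : ℕ) (s : ℝ) : 0 ≤ F.val n s :=
  le_trans F.zero_mem.2 (F.val_mono s (Nat.zero_le n))

lemma F_le_iSup (F : EntropyFn) {s : ℝ} (hs : 0 ≤ s) :
    F.F s ≤ ⨆ n, ENNReal.ofReal (F.val n s) := by
  refine le_of_forall_lt fun a ha => ?_
  obtain ⟨M, hM, hM2⟩ := ENNReal.lt_iff_exists_nnreal_btwn.1 ha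
  obtain ⟨q, hq, hlt⟩ := F.exists_minorant_I hs M.2 (M := (M:ℝ)) (by simpa using hM2)
  have hc : ContinuousOn (fun q => F.G q - q * s) F.I :=
    F.continuousOn_G.sub (by fun_prop)
  have ho := hc.isOpen_inter_preimage F.isOpen_I (isOpen_Ioi (a := (M:ℝ)))
  obtain ⟨r, hr1, hr2⟩ := (Rat.denseRange_cast (𝕜 := ℝ)).exists_mem_open ho ⟨q, hq, hlt⟩
  set n := @Encodable.encode ℚ Denumerable.toEncodable r with hn
  have hqn : F.qseq n = r := by
    unfold qseq
    rw [hn, Denumerable.ofNat_encode, if_pos hr1]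
  refine lt_of_lt_of_le hM (le_trans ?_ (le_iSup _ (n + 1)))
  rw [← ENNReal.ofReal_coe_nnreal]
  apply ENNReal.ofReal_le_ofReal
  refine le_trans (le_of_lt ?_) (le_max_right _ _)
  rw [hqn]; exact hr2

end EntropyFn

section Ent

variable {Y : Type*} [MetricSpace Y] [CompactSpace Y] [MeasurableSpace Y] [BorelSpace Y]

lemma cont_int {f : Y → ℝ} (hf : Continuous f) (μ : Measure Y) [IsFiniteMeasure μ] :
    Integrable f μ :=
  (BoundedContinuousFunction.mkOfCompact ⟨f, hf⟩).integrable μ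

lemma cont_G (F : EntropyFn) {φ : Y → ℝ} (hc : Continuous φ) (hφ : ∀ x, φ x ∈ F.I) :
    Continuous (fun x => F.G (φ x)) :=
  F.continuousOn_G.comp_continuous hc hφ

lemma posE_coe (a : ℝ) : posE (a : EReal) = ENNReal.ofReal a := by
  simp [posE]

lemma eInt_coe {α : Type*} [MeasurableSpace α] {μ : Measure α} {f : α → ℝ} (hf : Integrable f μ) :
    eIntegral μ (fun x => (f x : EReal)) = ((∫ x, f x ∂μ : ℝ) : EReal) := by
  have h1 : ∫⁻ x, ENNReal.ofReal (f x) ∂μ ≠ ⊤ := hf.lintegral_lt_top.ne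
  have h2 : ∫⁻ x, ENNReal.ofReal (-f x) ∂μ ≠ ⊤ := hf.neg.lintegral_lt_top.ne
  rw [integral_eq_lintegral_pos_part_sub_lintegral_neg_part hf]
  unfold eIntegral
  simp only [← EReal.coe_neg, posE_coe]
  rw [EReal.coe_sub, EReal.coe_ennreal_toReal h1, EReal.coe_ennreal_toReal h2]

lemma ofReal_int_le {α : Type*} [MeasurableSpace α] {μ : Measure α} {f : α → ℝ}
    (hf : Integrable f μ) :
    ENNReal.ofReal (∫ x, f x ∂μ) ≤ ∫⁻ x, ENNReal.ofReal (f x) ∂μ := by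
  have h1 : ∫⁻ x, ENNReal.ofReal (f x) ∂μ ≠ ⊤ := hf.lintegral_lt_top.ne
  rw [ENNReal.ofReal_le_iff_le_toReal h1,
    integral_eq_lintegral_pos_part_sub_lintegral_neg_part hf]
  have : 0 ≤ (∫⁻ x, ENNReal.ofReal (-f x) ∂μ).toReal := ENNReal.toReal_nonneg
  linarith

lemma int_split {α : Type*} [MeasurableSpace α] (γ μ : Measure α) [IsFiniteMeasure γ]
    [IsFiniteMeasure μ]
    {φ : α → ℝ} (hφ : Integrable φ γ) :
    Integrable (fun x => φ x * (γ.rnDeriv μ x).toReal) μ ∧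
    ∫ x, φ x ∂γ = ∫ x, φ x ∂(γ.singularPart μ) + ∫ x, φ x * (γ.rnDeriv μ x).toReal ∂μ := by
  have hdec := γ.haveLebesgueDecomposition_add μ
  have h1 : Integrable φ (γ.singularPart μ) :=
    hφ.mono_measure (Measure.singularPart_le γ μ)
  have h2 : Integrable φ (μ.withDensity (γ.rnDeriv μ)) :=
    hφ.mono_measure (Measure.withDensity_rnDeriv_le γ μ)
  constructor
  · rw [integrable_withDensity_iff (Measure.measurable_rnDeriv γ μ)
      (Measure.rnDeriv_lt_top γ μ)] at h2
    exact h2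
  · conv_lhs => rw [hdec]
    rw [integral_add_measure h1 h2, integral_withDensity_eq_integral_toReal_smul
      (Measure.measurable_rnDeriv γ μ) (Measure.rnDeriv_lt_top γ μ)]
    congr 1
    apply integral_congr_ae
    filter_upwards with x
    rw [smul_eq_mul, mul_comm]

lemma entF_ge (F : EntropyFn) (γ μ : Measure Y) [IsFiniteMeasure γ] [IsFiniteMeasure μ]
    {φ : Y → ℝ} (hc : Continuous φ) (hφ : ∀ x, φ x ∈ F.I) :
    ENNReal.ofReal (∫ x, F.G (φ x) ∂μ - ∫ x, φ x ∂γ) ≤ entF F γ μ := by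
  obtain ⟨h1, h2⟩ := int_split γ μ (cont_int hc γ)
  have hG := cont_int (cont_G F hc hφ) μ
  have hs : Integrable φ (γ.singularPart μ) := cont_int hc _
  rw [h2]
  have : ∫ x, F.G (φ x) ∂μ - (∫ x, φ x ∂(γ.singularPart μ)
      + ∫ x, φ x * (γ.rnDeriv μ x).toReal ∂μ) =
      ∫ x, (F.G (φ x) - φ x * (γ.rnDeriv μ x).toReal) ∂μ + ∫ x, - φ x ∂(γ.singularPart μ) := by
    rw [integral_sub hG h1, integral_neg]; ring
  rw [this]
  refine ENNReal.ofReal_add_le.trans (add_le_add ?_ ?_)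
  · refine (ofReal_int_le (hG.sub h1)).trans (lintegral_mono fun x => ?_)
    exact F.G_le (F.I_sub (hφ x)) ENNReal.toReal_nonneg
  · refine (ofReal_int_le hs.neg).trans ?_
    rw [← lintegral_const]
    exact lintegral_mono fun x => F.neg_le_recC (F.I_sub (hφ x))

lemma ext_meas (F : EntropyFn) (γ μ : Measure Y) [IsFiniteMeasure γ] [IsFiniteMeasure μ] {B : ℝ}
    (hB : ∀ φ : Y → ℝ, Continuous φ → (∀ x, φ x ∈ F.I) →
      ∫ x, F.G (φ x) ∂μ - ∫ x, φ x ∂γ ≤ B)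
    {φ : Y → ℝ} (hφ : Measurable φ) {a b : ℝ} (ha : a ∈ F.I) (hb : b ∈ F.I)
    (hab : ∀ x, φ x ∈ Icc a b) :
    ∫ x, F.G (φ x) ∂μ - ∫ x, φ x ∂γ ≤ B := by
  have hsub : Icc a b ⊆ F.I := F.convex_I.ordConnected.out ha hb
  by_cases hle : a ≤ b
  swap
  · have : IsEmpty Y := ⟨fun x => hle ((hab x).1.trans (hab x).2)⟩
    exact hB φ (continuous_of_discreteTopology) (fun x => hsub (hab x))
  obtain ⟨C, hC⟩ : ∃ C, ∀ t ∈ Icc a b, |F.G t| ≤ C :=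
    isCompact_Icc.exists_bound_of_continuousOn (F.continuousOn_G.mono hsub)
  have hmem : MemLp φ 1 (μ + γ) := by
    refine MemLp.of_bound hφ.aestronglyMeasurable (max |a| |b|) (Eventually.of_forall fun x => ?_)
    exact abs_le_max_abs_abs (hab x).1 (hab x).2
  have hex : ∀ n : ℕ, ∃ g : Y →ᵇ ℝ,
      eLpNorm (φ - ⇑g) 1 (μ + γ) ≤ ENNReal.ofReal (1 / ((n:ℝ) + 1)) ∧ MemLp g 1 (μ + γ) := by
    intro n
    apply hmem.exists_boundedContinuous_eLpNorm_sub_le ENNReal.one_ne_top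
    simp; positivity
  choose g hg hgm using hex
  have htm : TendstoInMeasure (μ + γ) (fun n => ⇑(g n)) atTop φ := by
    refine tendstoInMeasure_of_tendsto_eLpNorm one_ne_zero
      (fun n => (hgm n).aestronglyMeasurable) hmem.aestronglyMeasurable ?_
    have h0 : Tendsto (fun n : ℕ => ENNReal.ofReal (1 / ((n:ℝ) + 1))) atTop (𝓝 0) := by
      have := ENNReal.tendsto_ofReal (tendsto_one_div_add_atTop_nhds_zero_nat (𝕜 := ℝ))
      simpa using this
    refine tendsto_of_tendsto_of_tendsto_of_le_of_le tendsto_const_nhds h0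
      (fun n => zero_le) (fun n => ?_)
    rw [eLpNorm_sub_comm]; exact hg n
  obtain ⟨ns, -, hns⟩ := htm.exists_seq_tendsto_ae
  let k : ℕ → Y → ℝ := fun n x => max a (min b (g (ns n) x))
  have hkc : ∀ n, Continuous (k n) := fun n =>
    continuous_const.max (continuous_const.min (g (ns n)).continuous)
  have hkm : ∀ n x, k n x ∈ Icc a b := fun n x =>
    ⟨le_max_left _ _, max_le hle (min_le_left _ _)⟩
  have hk : ∀ᵐ x ∂(μ + γ), Tendsto (fun n => k n x) atTop (𝓝 (φ x)) := by
    filter_upwards [hns] with x hx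
    have h1 : Tendsto (fun n => k n x) atTop (𝓝 (max a (min b (φ x)))) :=
      tendsto_const_nhds.max (tendsto_const_nhds.min hx)
    rwa [min_eq_right (hab x).2, max_eq_right (hab x).1] at h1
  rw [ae_add_measure_iff] at hk
  have hlim1 : Tendsto (fun n => ∫ x, F.G (k n x) ∂μ) atTop (𝓝 (∫ x, F.G (φ x) ∂μ)) := by
    refine tendsto_integral_of_dominated_convergence (fun _ => C)
      (fun n => (cont_G F (hkc n) (fun x => hsub (hkm n x))).aestronglyMeasurable)
      (integrable_const C) (fun n => Eventually.of_forall fun x => hC _ (hkm n x)) ?_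
    filter_upwards [hk.1] with x hx
    exact ((F.continuousOn_G.continuousAt (F.isOpen_I.mem_nhds (hsub (hab x)))).tendsto).comp hx
  have hlim2 : Tendsto (fun n => ∫ x, k n x ∂γ) atTop (𝓝 (∫ x, φ x ∂γ)) := by
    refine tendsto_integral_of_dominated_convergence (fun _ => max |a| |b|)
      (fun n => (hkc n).aestronglyMeasurable)
      (integrable_const _) (fun n => Eventually.of_forall fun x =>
        abs_le_max_abs_abs (hkm n x).1 (hkm n x).2) hk.2
  exact le_of_tendsto (hlim1.sub hlim2) (Eventually.of_forall fun n =>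
    hB _ (hkc n) (fun x => hsub (hkm n x)))

lemma entF_le (F : EntropyFn) (h0 : (0:ℝ) ∈ F.I) (γ μ : Measure Y) [IsFiniteMeasure γ]
    [IsFiniteMeasure μ] {B : ℝ}
    (hB : ∀ φ : Y → ℝ, Continuous φ → (∀ x, φ x ∈ F.I) →
      ∫ x, F.G (φ x) ∂μ - ∫ x, φ x ∂γ ≤ B) :
    entF F γ μ ≠ ⊤ ∧ (entF F γ μ).toReal ≤ B := by
  classical
  obtain ⟨N, hN, hN1, hN2⟩ := Measure.mutuallySingular_singularPart γ μ
  set m := ((γ.singularPart μ) univ).toReal with hm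
  set f : Y → ℝ := fun x => (γ.rnDeriv μ x).toReal with hf
  have hfm : Measurable f := (Measure.measurable_rnDeriv γ μ).ennreal_toReal
  have hμN : ∀ᵐ x ∂μ, x ∈ N := by
    rw [ae_iff]; exact hN2
  have hγN : ∀ᵐ x ∂(γ.singularPart μ), x ∉ N := by
    rw [ae_iff]; simpa using hN1
  have key : ∀ q ∈ F.I, ∀ n, Integrable (fun x => F.val n (f x)) μ ∧
      ∫ x, F.val n (f x) ∂μ ≤ B + q * m := by
    intro q hq n
    obtain ⟨a, ha, b, hb, hab⟩ := F.sel_range h0 n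
    set φ : Y → ℝ := fun x => if x ∈ N then F.sel n (f x) else q with hφ
    have hφm : Measurable φ := Measurable.ite hN ((F.measurable_sel n).comp hfm) measurable_const
    have hr1 : min a q ∈ F.I := by
      rcases min_choice a q with h | h <;> rw [h] <;> assumption
    have hr2 : max b q ∈ F.I := by
      rcases max_choice b q with h | h <;> rw [h] <;> assumption
    have hran : ∀ x, φ x ∈ Icc (min a q) (max b q) := by
      intro x
      simp only [hφ]
      split_ifs
      · exact ⟨(min_le_left _ _).trans (hab _).1, (hab _).2.trans (le_max_left _ _)⟩
      · exact ⟨min_le_right _ _, le_max_right _ _⟩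
    have h1 := ext_meas F γ μ hB hφm hr1 hr2 hran
    have hφint : Integrable φ γ :=
      Integrable.of_bound hφm.aestronglyMeasurable (max |min a q| |max b q|)
        (Eventually.of_forall fun x => abs_le_max_abs_abs (hran x).1 (hran x).2)
    obtain ⟨h2, h3⟩ := int_split γ μ hφint
    have hsub : Icc a b ⊆ F.I := F.convex_I.ordConnected.out ha hb
    obtain ⟨C, hC⟩ : ∃ C, ∀ t ∈ Icc a b, |F.G t| ≤ C :=
      isCompact_Icc.exists_bound_of_continuousOn (F.continuousOn_G.mono hsub)
    have hGm : Measurable (fun s => F.G (F.sel n s)) := by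
      have : (fun s => F.G (F.sel n s)) = fun s => F.val n s + F.sel n s * s := by
        funext s; rw [F.val_eq]; ring
      rw [this]
      exact (F.measurable_val n).add ((F.measurable_sel n).mul measurable_id)
    have hGint : Integrable (fun x => F.G (F.sel n (f x))) μ :=
      Integrable.of_bound (hGm.comp hfm).aestronglyMeasurable C
        (Eventually.of_forall fun x => hC _ (hab _))
    have h4 : ∫ x, F.G (φ x) ∂μ = ∫ x, F.G (F.sel n (f x)) ∂μ := by
      apply integral_congr_ae
      filter_upwards [hμN] with x hx
      simp [hφ, hx]
    have h5e : (fun x => φ x * (γ.rnDeriv μ x).toReal) =ᵐ[μ] fun x => F.sel n (f x) * f x := by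
      filter_upwards [hμN] with x hx
      simp [hφ, hx, hf]
    have h5 := integral_congr_ae h5e
    have h5i := h2.congr h5e
    have h6 : ∫ x, φ x ∂(γ.singularPart μ) = q * m := by
      have : ∫ x, φ x ∂(γ.singularPart μ) = ∫ x, q ∂(γ.singularPart μ) := by
        apply integral_congr_ae
        filter_upwards [hγN] with x hx
        simp [hφ, hx]
      rw [this, integral_const, smul_eq_mul, mul_comm]
      rfl
    have h7 : (fun x => F.val n (f x)) = fun x => F.G (F.sel n (f x)) - F.sel n (f x) * f x := by
      funext x; rw [F.val_eq]
    rw [h7]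
    refine ⟨hGint.sub h5i, ?_⟩
    rw [integral_sub hGint h5i]
    rw [h3, h4, h5, h6] at h1
    linarith
  set A := ∫⁻ x, F.F (f x) ∂μ with hA
  have hAle : ∀ q ∈ F.I, A ≤ ENNReal.ofReal (B + q * m) := by
    intro q hq
    calc A ≤ ∫⁻ x, ⨆ n, ENNReal.ofReal (F.val n (f x)) ∂μ :=
          lintegral_mono fun x => F.F_le_iSup ENNReal.toReal_nonneg
      _ = ⨆ n, ∫⁻ x, ENNReal.ofReal (F.val n (f x)) ∂μ := by
          apply lintegral_iSup
          · intro n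
            exact ((F.measurable_val n).comp hfm).ennreal_ofReal
          · intro i j hij x
            exact ENNReal.ofReal_le_ofReal (F.val_mono (f x) hij)
      _ ≤ ENNReal.ofReal (B + q * m) := by
          refine iSup_le fun n => ?_
          rw [← ofReal_integral_eq_lintegral_ofReal (key q hq n).1
            (Eventually.of_forall fun x => F.val_nonneg n (f x))]
          exact ENNReal.ofReal_le_ofReal (key q hq n).2
  have hnn : ∀ q ∈ F.I, 0 ≤ B + q * m := fun q hq =>
    le_trans (integral_nonneg fun x => F.val_nonneg 0 (f x)) (key q hq 0).2
  have hAt : A ≠ ⊤ := ne_top_of_le_ne_top ENNReal.ofReal_ne_top (hAle 0 h0)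
  have hAr : ∀ q ∈ F.I, A.toReal ≤ B + q * m := by
    intro q hq
    exact ENNReal.toReal_le_of_le_ofReal (hnn q hq) (hAle q hq)
  have hsing : F.recC * (γ.singularPart μ) univ ≤ ENNReal.ofReal (B - A.toReal) := by
    by_cases hz : (γ.singularPart μ) univ = 0
    · rw [hz]; simp
    · have hmpos : 0 < m := ENNReal.toReal_pos hz (measure_ne_top _ _)
      have hrec : F.recC ≤ ENNReal.ofReal ((B - A.toReal) / m) := by
        refine ENNReal.le_of_forall_nnreal_lt fun r hr => ?_
        obtain ⟨r', h1, h2⟩ := ENNReal.lt_iff_exists_nnreal_btwn.1 hr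
        have h3 : -(r':ℝ) ∈ F.circDom := F.neg_mem_of_lt_recC r'.2 (by simpa using h2)
        have h4 : -(r:ℝ) ∈ F.I := F.mem_I_of_lt h3 (by
          have : r < r' := by exact_mod_cast h1
          simpa using this)
        have h5 := hAr _ h4
        rw [← ENNReal.ofReal_coe_nnreal]
        apply ENNReal.ofReal_le_ofReal
        rw [le_div_iff₀ hmpos]
        linarith
      have hme : (γ.singularPart μ) univ = ENNReal.ofReal m :=
        (ENNReal.ofReal_toReal (measure_ne_top _ _)).symm
      rw [hme]
      refine (mul_le_mul_left hrec _).trans ?_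
      rw [← ENNReal.ofReal_mul' hmpos.le, div_mul_cancel₀ _ hmpos.ne']
  have hfin : entF F γ μ ≤ ENNReal.ofReal B := by
    have h00 := hAr 0 h0
    have : ENNReal.ofReal B = ENNReal.ofReal (A.toReal) + ENNReal.ofReal (B - A.toReal) := by
      rw [← ENNReal.ofReal_add ENNReal.toReal_nonneg (by linarith)]
      congr 1; ring
    rw [this, ENNReal.ofReal_toReal hAt]
    exact add_le_add le_rfl hsing
  have hB0 : 0 ≤ B := by have := hnn 0 h0; linarith
  exact ⟨ne_top_of_le_ne_top ENNReal.ofReal_ne_top hfin, ENNReal.toReal_le_of_le_ofReal hB0 hfin⟩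

end Ent

section Cost

lemma posE_eq (a : EReal) : posE a = a.toENNReal := rfl

lemma posE_mono {a b : EReal} (h : a ≤ b) : posE a ≤ posE b := by
  rw [posE_eq, posE_eq]; exact EReal.toENNReal_le_toENNReal h

lemma eInt_mono {α : Type*} [MeasurableSpace α] (μ : Measure α) {f g : α → EReal}
    (h : ∀ x, f x ≤ g x) : eIntegral μ f ≤ eIntegral μ g := by
  unfold eIntegral
  apply EReal.sub_le_sub
  · exact_mod_cast lintegral_mono fun x => posE_mono (h x)
  · exact_mod_cast lintegral_mono fun x => posE_mono (EReal.neg_le_neg_iff.2 (h x))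

variable {Z : Type*} [MetricSpace Z]

/-- truncation -/
def trunc (c : Z → EReal) (n : ℕ) (z : Z) : ℝ := (min (c z) ((n : ℝ) : EReal)).toReal

/-- Lipschitz regularisation -/
def lipReg (c : Z → EReal) (n : ℕ) (x : Z) : ℝ := ⨅ y, (trunc c n y + n * dist x y)

variable {c : Z → EReal} {K : ℝ}

lemma trunc_coe (hK : ∀ z, (K : EReal) ≤ c z) (n : ℕ) (z : Z) :
    ((trunc c n z : ℝ) : EReal) = min (c z) ((n : ℝ) : EReal) := by
  apply EReal.coe_toReal
  · exact ne_top_of_le_ne_top (EReal.coe_ne_top _) (min_le_right _ _)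
  · refine ne_bot_of_le_ne_bot (EReal.coe_ne_bot (min K n)) ?_
    apply le_min
    · exact le_trans (EReal.coe_le_coe_iff.2 (min_le_left _ _)) (hK z)
    · exact EReal.coe_le_coe_iff.2 (min_le_right _ _)

lemma le_trunc (hK : ∀ z, (K : EReal) ≤ c z) (hK0 : K ≤ 0) (n : ℕ) (z : Z) : K ≤ trunc c n z := by
  rw [← EReal.coe_le_coe_iff, trunc_coe hK]
  refine le_min (hK z) (EReal.coe_le_coe_iff.2 (hK0.trans (by positivity)))

lemma lipReg_bdd (hK : ∀ z, (K : EReal) ≤ c z) (hK0 : K ≤ 0) (n : ℕ) (x : Z) :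
    BddBelow (range fun y => trunc c n y + n * dist x y) := by
  refine ⟨K, ?_⟩
  rintro _ ⟨y, rfl⟩
  have := le_trunc hK hK0 n y
  have h2 : 0 ≤ (n:ℝ) * dist x y := by positivity
  simp only; linarith

lemma le_lipReg (hK : ∀ z, (K : EReal) ≤ c z) (hK0 : K ≤ 0) (n : ℕ) (x : Z) :
    K ≤ lipReg c n x := by
  haveI : Nonempty Z := ⟨x⟩
  refine le_ciInf fun y => ?_
  have := le_trunc hK hK0 n y
  have h2 : 0 ≤ (n:ℝ) * dist x y := by positivity
  linarith

lemma lipReg_le (hK : ∀ z, (K : EReal) ≤ c z) (hK0 : K ≤ 0) (n : ℕ) (x : Z) :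
    ((lipReg c n x : ℝ) : EReal) ≤ c x := by
  have h1 : lipReg c n x ≤ trunc c n x := by
    have := ciInf_le (lipReg_bdd hK hK0 n x) x
    simpa [lipReg] using this
  refine le_trans (EReal.coe_le_coe_iff.2 h1) ?_
  rw [trunc_coe hK]
  exact min_le_left _ _

lemma lipReg_cont (hK : ∀ z, (K : EReal) ≤ c z) (hK0 : K ≤ 0) (n : ℕ) :
    Continuous (lipReg c n) := by
  have : LipschitzWith (n : ℝ≥0) (lipReg c n) := by
    apply LipschitzWith.of_le_add_mul
    intro x y
    haveI : Nonempty Z := ⟨x⟩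
    have : lipReg c n x - n * dist x y ≤ lipReg c n y := by
      refine le_ciInf fun z => ?_
      have h1 := ciInf_le (lipReg_bdd hK hK0 n x) z
      have h2 := dist_triangle x y z
      have h3 : (n:ℝ) * dist x z ≤ n * (dist x y + dist y z) := by gcongr
      change lipReg c n x ≤ _ at h1
      linarith
    simp only [NNReal.coe_natCast]
    linarith
  exact this.continuous

lemma lipReg_tendsto (hK : ∀ z, (K : EReal) ≤ c z) (hK0 : K ≤ 0) (hlsc : LowerSemicontinuous c)
    (x : Z) : Tendsto (fun n => ((lipReg c n x : ℝ) : EReal)) atTop (𝓝 (c x)) := by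
  haveI : Nonempty Z := ⟨x⟩
  rw [tendsto_order]
  constructor
  · intro a ha
    obtain ⟨M, hM1, hM2⟩ := EReal.lt_iff_exists_real_btwn.1 ha
    have h1 := hlsc x M hM2
    obtain ⟨δ, hδ, hball⟩ := Metric.eventually_nhds_iff.1 h1
    obtain ⟨N, hN⟩ := exists_nat_ge (max M ((M - K) / δ))
    filter_upwards [eventually_ge_atTop N] with n hn
    refine lt_of_lt_of_le hM1 (EReal.coe_le_coe_iff.2 ?_)
    have hnN : (N:ℝ) ≤ n := by exact_mod_cast hn
    have hn1 : M ≤ n := (le_max_left _ _).trans (hN.trans hnN)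
    have hn2 : (M - K) / δ ≤ n := (le_max_right _ _).trans (hN.trans hnN)
    rw [div_le_iff₀ hδ] at hn2
    refine le_ciInf fun y => ?_
    rcases lt_or_ge (dist y x) δ with hd | hd
    · have h3 : M ≤ trunc c n y := by
        rw [← EReal.coe_le_coe_iff, trunc_coe hK]
        exact le_min (hball hd).le (EReal.coe_le_coe_iff.2 hn1)
      have h2 : 0 ≤ (n:ℝ) * dist x y := by positivity
      linarith
    · have h3 := le_trunc hK hK0 n y
      rw [dist_comm] at hd
      have h4 : (n:ℝ) * δ ≤ n * dist x y := by gcongr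
      linarith
  · intro a ha
    exact Eventually.of_forall fun n => lt_of_le_of_lt (lipReg_le hK hK0 n x) ha

variable [CompactSpace Z] [MeasurableSpace Z] [BorelSpace Z]

lemma eInt_le (hK : ∀ z, (K : EReal) ≤ c z) (hlsc : LowerSemicontinuous c) (γ : Measure Z)
    [IsFiniteMeasure γ] {B : ℝ}
    (hB : ∀ g : Z → ℝ, Continuous g → (∀ z, ((g z : ℝ) : EReal) ≤ c z) → ∫ z, g z ∂γ ≤ B) :
    eIntegral γ c ≤ (B : EReal) := by
  wlog hK0 : K ≤ 0 generalizing K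
  · exact this (K := 0) (fun z => le_trans (EReal.coe_le_coe_iff.2 (le_of_not_ge hK0)) (hK z)) le_rfl
  set g : ℕ → Z → ℝ := lipReg c with hg
  have hgc : ∀ n, Continuous (g n) := lipReg_cont hK hK0
  have hgi : ∀ n, Integrable (g n) γ := fun n => cont_int (hgc n) γ
  have hgB : ∀ n, ∫ z, g n z ∂γ ≤ B := fun n => hB _ (hgc n) (lipReg_le hK hK0 n)
  set P := ∫⁻ z, posE (c z) ∂γ with hP
  set N := ∫⁻ z, posE (-(c z)) ∂γ with hN
  have hNt : N ≠ ⊤ := by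
    refine ne_top_of_le_ne_top (b := ∫⁻ _, ENNReal.ofReal (-K) ∂γ) ?_ ?_
    · rw [lintegral_const]
      exact ENNReal.mul_ne_top ENNReal.ofReal_ne_top (measure_ne_top _ _)
    · refine lintegral_mono fun z => ?_
      rw [← posE_coe, EReal.coe_neg]
      exact posE_mono (EReal.neg_le_neg_iff.2 (hK z))
  have hcE : Continuous posE := EReal.continuous_toENNReal
  have hlimN : Tendsto (fun n => ∫⁻ z, ENNReal.ofReal (-(g n z)) ∂γ) atTop (𝓝 N) := by
    refine tendsto_lintegral_of_dominated_convergence (fun _ => ENNReal.ofReal (-K))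
      (fun n => ?_) (fun n => ?_) ?_ ?_
    · exact (hgc n).measurable.neg.ennreal_ofReal
    · exact Eventually.of_forall fun z =>
        ENNReal.ofReal_le_ofReal (neg_le_neg (le_lipReg hK hK0 n z))
    · rw [lintegral_const]
      exact ENNReal.mul_ne_top ENNReal.ofReal_ne_top (measure_ne_top _ _)
    · refine Eventually.of_forall fun z => ?_
      have h1 := (hcE.tendsto _).comp (((continuous_neg (G := EReal)).tendsto _).comp
        (lipReg_tendsto hK hK0 hlsc z))
      refine h1.congr fun n => ?_
      simp only [Function.comp]
      rw [← EReal.coe_neg, posE_coe]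
  have hPn : ∀ n, (∫⁻ z, ENNReal.ofReal (g n z) ∂γ).toReal
      ≤ B + (∫⁻ z, ENNReal.ofReal (-(g n z)) ∂γ).toReal := by
    intro n
    have h1 := integral_eq_lintegral_pos_part_sub_lintegral_neg_part (hgi n)
    have h2 := hgB n
    linarith
  have hlimN' := (ENNReal.tendsto_toReal hNt).comp hlimN
  have hBN : 0 ≤ B + N.toReal :=
    ge_of_tendsto (tendsto_const_nhds.add hlimN') (Eventually.of_forall fun n =>
      le_trans ENNReal.toReal_nonneg (hPn n))
  have hPle : P ≤ ENNReal.ofReal (B + N.toReal) := by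
    have h1 : P ≤ ∫⁻ z, liminf (fun n => ENNReal.ofReal (g n z)) atTop ∂γ := by
      refine lintegral_mono fun z => le_of_eq ?_
      have h1 := (hcE.tendsto _).comp (lipReg_tendsto hK hK0 hlsc z)
      have h2 : Tendsto (fun n => ENNReal.ofReal (g n z)) atTop (𝓝 (posE (c z))) := by
        refine h1.congr fun n => ?_
        simp only [Function.comp]
        rw [posE_coe]
      exact h2.liminf_eq.symm
    refine h1.trans ((lintegral_liminf_le fun n => (hgc n).measurable.ennreal_ofReal).trans ?_)
    have h3 : Tendsto (fun n => ENNReal.ofReal (B + (∫⁻ z, ENNReal.ofReal (-(g n z)) ∂γ).toReal))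
        atTop (𝓝 (ENNReal.ofReal (B + N.toReal))) :=
      ENNReal.tendsto_ofReal (tendsto_const_nhds.add hlimN')
    rw [← h3.liminf_eq]
    refine liminf_le_liminf (Eventually.of_forall fun n => ?_)
    rw [← ENNReal.ofReal_toReal (hgi n).lintegral_lt_top.ne]
    exact ENNReal.ofReal_le_ofReal (hPn n)
  have hPt : P ≠ ⊤ := ne_top_of_le_ne_top ENNReal.ofReal_ne_top hPle
  have hPr : P.toReal ≤ B + N.toReal := ENNReal.toReal_le_of_le_ofReal hBN hPle
  change ((P : ℝ≥0∞) : EReal) - ((N : ℝ≥0∞) : EReal) ≤ B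
  rw [← EReal.coe_ennreal_toReal hPt, ← EReal.coe_ennreal_toReal hNt, ← EReal.coe_sub,
    EReal.coe_le_coe_iff]
  linarith

open CompactlySupported in
lemma rmk_exists (L : C(Z, ℝ) →ₗ[ℝ] ℝ) (hL : ∀ u : C(Z, ℝ), (∀ z, 0 ≤ u z) → 0 ≤ L u) :
    ∃ γ : Measure Z, IsFiniteMeasure γ ∧ ∀ u : C(Z, ℝ), L u = ∫ z, u z ∂γ := by
  let Λ0 : C_c(Z, ℝ) →ₗ[ℝ] ℝ :=
    { toFun := fun f => L (f : C(Z, ℝ))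
      map_add' := fun f g => by rw [← map_add]; rfl
      map_smul' := fun a f => by
        rw [RingHom.id_apply, ← map_smul]; rfl }
  let Λ : C_c(Z, ℝ) →ₚ[ℝ] ℝ := PositiveLinearMap.mk₀ Λ0 (fun f hf => hL _ (fun z => hf z))
  refine ⟨RealRMK.rieszMeasure Λ, inferInstance, fun u => ?_⟩
  have := RealRMK.integral_rieszMeasure Λ (CompactlySupportedContinuousMap.continuousMapEquiv u)
  exact this.symm

end Cost

section Mart

variable {X : Set ℝ} [CompactSpace ↥X] [StandardBorelSpace ↥X] [Nonempty ↥X]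

lemma mart_int (γ : Measure (↥X × ↥X)) (hγ : IsFiniteMeasure γ) (h : ↥X → ℝ) (hh : Continuous h) :
    ∫ q, h q.1 * ((q.2 : ℝ) - (q.1 : ℝ)) ∂γ
      = ∫ x, h x * (∫ y, ((y : ℝ) - (x : ℝ)) ∂(γ.condKernel x)) ∂γ.fst := by
  have hc : Continuous (fun q : ↥X × ↥X => h q.1 * ((q.2 : ℝ) - (q.1 : ℝ))) := by fun_prop
  rw [← Measure.integral_condKernel (cont_int hc γ)]
  apply integral_congr_ae
  filter_upwards with x
  rw [← integral_const_mul]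

lemma inner_eq (γ : Measure (↥X × ↥X)) (hγ : IsFiniteMeasure γ) (x : ↥X) :
    (∫ y, ((y : ℝ) - (x : ℝ)) ∂(γ.condKernel x)) = (∫ y, (y : ℝ) ∂(γ.condKernel x)) - x := by
  rw [integral_sub (cont_int (by fun_prop) _) (integrable_const _)]
  simp

lemma mart_to (γ : Measure (↥X × ↥X)) (hγ : IsFiniteMeasure γ) (hm : martCond γ hγ)
    (h : ↥X → ℝ) (hh : Continuous h) :
    ∫ q, h q.1 * ((q.2 : ℝ) - (q.1 : ℝ)) ∂γ = 0 := by
  rw [mart_int γ hγ h hh]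
  apply integral_eq_zero_of_ae
  filter_upwards [hm] with x hx
  rw [inner_eq γ hγ, hx]
  simp

lemma mart_of (γ : Measure (↥X × ↥X)) (hγ : IsFiniteMeasure γ)
    (H : ∀ h : ↥X → ℝ, Continuous h → ∫ q, h q.1 * ((q.2 : ℝ) - (q.1 : ℝ)) ∂γ = 0) :
    martCond γ hγ := by
  set g : ↥X → ℝ := fun x => ∫ y, ((y : ℝ) - (x : ℝ)) ∂(γ.condKernel x) with hg
  have hc : Continuous (fun q : ↥X × ↥X => ((q.2 : ℝ) - (q.1 : ℝ))) := by fun_prop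
  have hgi : Integrable g γ.fst := (cont_int hc γ).integral_condKernel
  obtain ⟨C, hC⟩ : ∃ C, ∀ q : ↥X × ↥X, ‖((q.2 : ℝ) - (q.1 : ℝ))‖ ≤ C := by
    obtain ⟨C, hC⟩ := isCompact_univ.exists_bound_of_continuousOn (hc.continuousOn (s := univ))
    exact ⟨C, fun q => hC q (mem_univ _)⟩
  have hgC : ∀ x, |g x| ≤ C := by
    intro x
    have := norm_integral_le_of_norm_le_const (μ := γ.condKernel x)
      (Eventually.of_forall fun y => hC (x, y))
    simpa using this
  have hC0 : 0 ≤ C := le_trans (norm_nonneg _) (hC (Classical.arbitrary _))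
  have hg2 : Integrable (fun x => g x * g x) γ.fst :=
    hgi.bdd_mul hgi.aestronglyMeasurable (Eventually.of_forall hgC)
  have hle : ∀ ε : ℝ, 0 < ε → ∫ x, g x * g x ∂γ.fst ≤ C * ε := by
    intro ε hε
    obtain ⟨h, hh1, hh2⟩ := hgi.exists_boundedContinuous_integral_sub_le hε
    have h0 : ∫ x, h x * g x ∂γ.fst = 0 := by
      rw [← H h h.continuous, mart_int γ hγ h h.continuous]
    have hhg : Integrable (fun x => h x * g x) γ.fst :=
      (hh2.bdd_mul hgi.aestronglyMeasurable (Eventually.of_forall hgC)).congr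
        (Eventually.of_forall fun x => mul_comm _ _)
    have h1 : ∫ x, g x * g x ∂γ.fst = ∫ x, (g x * g x - h x * g x) ∂γ.fst := by
      rw [integral_sub hg2 hhg, h0, sub_zero]
    rw [h1]
    calc ∫ x, (g x * g x - h x * g x) ∂γ.fst ≤ ∫ x, C * ‖g x - h x‖ ∂γ.fst := by
          refine integral_mono (hg2.sub hhg) ((hgi.sub hh2).norm.const_mul C) fun x => ?_
          have h3 : g x * g x - h x * g x = (g x - h x) * g x := by ring
          simp only [h3]
          refine (le_abs_self _).trans ?_
          rw [abs_mul, mul_comm, Real.norm_eq_abs]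
          exact mul_le_mul_of_nonneg_right (hgC x) (abs_nonneg _)
      _ = C * ∫ x, ‖g x - h x‖ ∂γ.fst := integral_const_mul _ _
      _ ≤ C * ε := mul_le_mul_of_nonneg_left hh1 hC0
  have hzero : ∫ x, g x * g x ∂γ.fst = 0 := by
    apply le_antisymm
    · by_contra hpos
      push Not at hpos
      have := hle ((∫ x, g x * g x ∂γ.fst) / (2 * (C + 1))) (by positivity)
      rw [← mul_div_assoc, le_div_iff₀ (by positivity)] at this
      nlinarith
    · exact integral_nonneg fun x => mul_self_nonneg _
  rw [integral_eq_zero_iff_of_nonneg (fun x => mul_self_nonneg _) hg2] at hzero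
  unfold martCond
  filter_upwards [hzero] with x hx
  have h1 : g x = 0 := by simpa using hx
  simp only [hg] at h1
  rw [inner_eq γ hγ] at h1
  linarith

end Mart

section Dual

variable {X : Set ℝ} [CompactSpace ↥X]

def affM (φ1 φ2 h : C(↥X, ℝ)) (x y : ↥X) : ℝ := φ1 x + φ2 y + h x * ((y : ℝ) - (x : ℝ))

def jM (F₁ F₂ : EntropyFn) (μ₁ μ₂ : Measure ↥X) (φ1 φ2 : C(↥X, ℝ)) : ℝ :=
  ∫ x, F₁.G (φ1 x) ∂μ₁ + ∫ x, F₂.G (φ2 x) ∂μ₂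

def aSet (c : ↥X → ↥X → EReal) (F₁ F₂ : EntropyFn) (μ₁ μ₂ : Measure ↥X) (D : ℝ) :
    Set (C(↥X × ↥X, ℝ) × ℝ) :=
  { p | ∃ φ1 φ2 h : C(↥X, ℝ), (∀ x, φ1 x ∈ F₁.I) ∧ (∀ x, φ2 x ∈ F₂.I) ∧ ∃ ε : ℝ, 0 < ε ∧
      (∀ x y, ((affM φ1 φ2 h x y + ε - p.1 (x, y) : ℝ) : EReal) ≤ c x y) ∧
      p.2 < jM F₁ F₂ μ₁ μ₂ φ1 φ2 - D }

lemma int_conc (F : EntropyFn) (μ : Measure ↥X) [IsFiniteMeasure μ] (φ ψ : C(↥X, ℝ))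
    (hφ : ∀ x, φ x ∈ F.I) (hψ : ∀ x, ψ x ∈ F.I) {a b : ℝ} (ha : 0 ≤ a) (hb : 0 ≤ b)
    (hab : a + b = 1) :
    (∀ x, (a • φ + b • ψ) x ∈ F.I) ∧
    a * ∫ x, F.G (φ x) ∂μ + b * ∫ x, F.G (ψ x) ∂μ ≤ ∫ x, F.G ((a • φ + b • ψ) x) ∂μ := by
  have hm : ∀ x, (a • φ + b • ψ) x ∈ F.I := fun x => F.convex_I (hφ x) (hψ x) ha hb hab
  refine ⟨hm, ?_⟩
  have h1 := cont_int (cont_G F φ.continuous hφ) μ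
  have h2 := cont_int (cont_G F ψ.continuous hψ) μ
  have h3 := cont_int (cont_G F (a • φ + b • ψ).continuous hm) μ
  rw [← integral_const_mul, ← integral_const_mul,
    ← integral_add (h1.const_mul a) (h2.const_mul b)]
  refine integral_mono ((h1.const_mul a).add (h2.const_mul b)) h3 fun x => ?_
  exact (F.concave_aux (F.I_sub (hφ x)) (F.I_sub (hψ x)) ha hb hab).2

variable {c : ↥X → ↥X → EReal} {F₁ F₂ : EntropyFn} {μ₁ μ₂ : Measure ↥X}
  [IsFiniteMeasure μ₁] [IsFiniteMeasure μ₂] {D : ℝ}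

lemma aSet_convex : Convex ℝ (aSet c F₁ F₂ μ₁ μ₂ D) := by
  rintro p ⟨φ1, φ2, h, h1, h2, ε, hε, hc, hj⟩ q ⟨ψ1, ψ2, k, k1, k2, δ, hδ, kc, kj⟩ a b ha hb hab
  obtain ⟨m1, i1⟩ := int_conc F₁ μ₁ φ1 ψ1 h1 k1 ha hb hab
  obtain ⟨m2, i2⟩ := int_conc F₂ μ₂ φ2 ψ2 h2 k2 ha hb hab
  refine ⟨a • φ1 + b • ψ1, a • φ2 + b • ψ2, a • h + b • k, m1, m2, a * ε + b * δ, ?_, ?_, ?_⟩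
  · exact (convex_Ioi (0:ℝ)) hε hδ ha hb hab
  · intro x y
    set s := affM φ1 φ2 h x y + ε - p.1 (x, y) with hs
    set t := affM ψ1 ψ2 k x y + δ - q.1 (x, y) with ht
    have e : affM (a • φ1 + b • ψ1) (a • φ2 + b • ψ2) (a • h + b • k) x y + (a * ε + b * δ)
        - (a • p + b • q).1 (x, y) = a * s + b * t := by
      simp [affM, hs, ht]; ring
    rw [e]
    have hle : a * s + b * t ≤ max s t := by
      have e1 := mul_le_mul_of_nonneg_left (le_max_left s t) ha
      have e2 := mul_le_mul_of_nonneg_left (le_max_right s t) hb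
      calc a * s + b * t ≤ a * max s t + b * max s t := add_le_add e1 e2
        _ = max s t := by rw [← add_mul, hab, one_mul]
    refine (EReal.coe_le_coe_iff.2 hle).trans ?_
    rcases max_choice s t with hm | hm
    · rw [hm]; exact hc x y
    · rw [hm]; exact kc x y
  · have e1 : a * p.2 + b * q.2 < a * (jM F₁ F₂ μ₁ μ₂ φ1 φ2 - D)
        + b * (jM F₁ F₂ μ₁ μ₂ ψ1 ψ2 - D) := by
      rcases ha.eq_or_lt with h0 | h0
      · subst h0
        have : b = 1 := by linarith
        subst this; linarith
      · have := mul_lt_mul_of_pos_left hj h0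
        have := mul_le_mul_of_nonneg_left kj.le hb
        linarith
    have e2 : a * D + b * D = D := by rw [← add_mul, hab, one_mul]
    change a * p.2 + b * q.2 < _
    unfold jM at *
    linarith

lemma aSet_open : IsOpen (aSet c F₁ F₂ μ₁ μ₂ D) := by
  rw [isOpen_iff_mem_nhds]
  rintro p ⟨φ1, φ2, h, h1, h2, ε, hε, hc, hj⟩
  have e1 : ∀ᶠ q : C(↥X × ↥X, ℝ) × ℝ in 𝓝 p, q.1 ∈ Metric.ball p.1 (ε / 2) :=
    (continuous_fst.tendsto p).eventually (Metric.ball_mem_nhds _ (by positivity))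
  have e2 : ∀ᶠ q : C(↥X × ↥X, ℝ) × ℝ in 𝓝 p, q.2 < jM F₁ F₂ μ₁ μ₂ φ1 φ2 - D :=
    (continuous_snd.tendsto p).eventually (gt_mem_nhds hj)
  filter_upwards [e1, e2] with q hq1 hq2
  refine ⟨φ1, φ2, h, h1, h2, ε / 2, by positivity, fun x y => ?_, hq2⟩
  refine (EReal.coe_le_coe_iff.2 ?_).trans (hc x y)
  have := ContinuousMap.dist_apply_le_dist (f := q.1) (g := p.1) (x, y)
  have h3 := lt_of_le_of_lt this hq1
  rw [Real.dist_eq, abs_lt] at h3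
  linarith [h3.1]

lemma hb_dual {K : ℝ} (hK : ∀ x y, (K : EReal) ≤ c x y) (h01 : (0:ℝ) ∈ F₁.I)
    (h02 : ∀ t : ℝ, t ∈ F₂.I)
    (hD : ∀ φ1 φ2 h : C(↥X, ℝ), (∀ x, φ1 x ∈ F₁.I) → (∀ x, φ2 x ∈ F₂.I) →
      (∀ x y, ((affM φ1 φ2 h x y : ℝ) : EReal) ≤ c x y) → jM F₁ F₂ μ₁ μ₂ φ1 φ2 ≤ D) :
    ∃ L : C(↥X × ↥X, ℝ) →ₗ[ℝ] ℝ, (∀ u : C(↥X × ↥X, ℝ), (∀ z, 0 ≤ u z) → 0 ≤ L u) ∧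
      ∀ φ1 φ2 h : C(↥X, ℝ), (∀ x, φ1 x ∈ F₁.I) → (∀ x, φ2 x ∈ F₂.I) →
      ∀ w : C(↥X × ↥X, ℝ), (∀ x y, ((affM φ1 φ2 h x y - w (x, y) : ℝ) : EReal) ≤ c x y) →
        jM F₁ F₂ μ₁ μ₂ φ1 φ2 ≤ D + L w := by
  have hn : (0 : C(↥X × ↥X, ℝ) × ℝ) ∉ aSet c F₁ F₂ μ₁ μ₂ D := by
    rintro ⟨φ1, φ2, h, h1, h2, ε, hε, hc, hj⟩
    have := hD φ1 φ2 h h1 h2 fun x y => (EReal.coe_le_coe_iff.2 (by simp; exact hε.le)).trans (hc x y)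
    have hj' : (0:ℝ) < jM F₁ F₂ μ₁ μ₂ φ1 φ2 - D := hj
    linarith
  obtain ⟨f, hf⟩ := geometric_hahn_banach_open_point aSet_convex aSet_open hn
  rw [map_zero] at hf
  set φ0 : C(↥X, ℝ) := ContinuousMap.const _ (K - 1) with hφ0
  set t0 : ℝ := min (jM F₁ F₂ μ₁ μ₂ 0 φ0 - D) 0 - 1 with ht0
  have ht0' : t0 < 0 := by have := min_le_right (jM F₁ F₂ μ₁ μ₂ 0 φ0 - D) 0; linarith
  have hbase : ∀ u : C(↥X × ↥X, ℝ), (∀ z, 0 ≤ u z) → (u, t0) ∈ aSet c F₁ F₂ μ₁ μ₂ D := by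
    intro u hu
    refine ⟨0, φ0, 0, fun _ => h01, fun _ => h02 _, 1, one_pos, fun x y => ?_, ?_⟩
    · refine (EReal.coe_le_coe_iff.2 ?_).trans (hK x y)
      have := hu (x, y)
      simp [affM, hφ0]; exact this
    · have := min_le_left (jM F₁ F₂ μ₁ μ₂ 0 φ0 - D) 0
      change t0 < _
      linarith
  set τ : ℝ := f (0, 1) with hτ
  have hsplit : ∀ (u : C(↥X × ↥X, ℝ)) (t : ℝ), f (u, t) = f (u, 0) + t * τ := by
    intro u t
    have : (u, t) = (u, (0:ℝ)) + t • ((0 : C(↥X × ↥X, ℝ)), (1:ℝ)) := by simp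
    rw [this, map_add, map_smul, smul_eq_mul]
  have hτ0 : 0 < τ := by
    have h1 := hf _ (hbase 0 fun _ => le_rfl)
    rw [hsplit] at h1
    have h2 : f ((0 : C(↥X × ↥X, ℝ)), (0:ℝ)) = 0 := map_zero f
    rw [h2, zero_add] at h1
    by_contra hcon
    push Not at hcon
    nlinarith
  let L : C(↥X × ↥X, ℝ) →ₗ[ℝ] ℝ :=
    { toFun := fun u => -(f (u, 0)) / τ
      map_add' := fun u v => by
        have : (u + v, (0:ℝ)) = (u, (0:ℝ)) + (v, (0:ℝ)) := by simp
        rw [this, map_add]; ring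
      map_smul' := fun a u => by
        have : (a • u, (0:ℝ)) = a • (u, (0:ℝ)) := by simp
        rw [this, map_smul, smul_eq_mul, RingHom.id_apply, smul_eq_mul]; ring }
  have hL : ∀ (u : C(↥X × ↥X, ℝ)) (t : ℝ), (u, t) ∈ aSet c F₁ F₂ μ₁ μ₂ D → t < L u := by
    intro u t h
    have h1 := hf _ h
    rw [hsplit] at h1
    change t < -(f (u, 0)) / τ
    rw [lt_div_iff₀ hτ0]
    linarith
  have hLp : ∀ u : C(↥X × ↥X, ℝ), (∀ z, 0 ≤ u z) → 0 ≤ L u := by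
    intro u hu
    by_contra hcon
    push Not at hcon
    have h1 := hL _ _ (hbase ((t0 / L u) • u) fun z => by
      have : 0 ≤ t0 / L u := div_nonneg_of_nonpos ht0'.le hcon.le
      exact mul_nonneg this (hu z))
    rw [map_smul, smul_eq_mul, div_mul_cancel₀ _ hcon.ne] at h1
    exact lt_irrefl _ h1
  refine ⟨L, hLp, fun φ1 φ2 h h1 h2 w hw => ?_⟩
  have hone : 0 ≤ L 1 := hLp 1 fun _ => zero_le_one
  refine le_of_forall_pos_le_add fun ε hε => ?_
  set δ : ℝ := ε / (2 * (L 1 + 1)) with hδ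
  have hδ0 : 0 < δ := by positivity
  have hA : (w + δ • (1 : C(↥X × ↥X, ℝ)), jM F₁ F₂ μ₁ μ₂ φ1 φ2 - D - ε / 2)
      ∈ aSet c F₁ F₂ μ₁ μ₂ D := by
    refine ⟨φ1, φ2, h, h1, h2, δ, hδ0, fun x y => ?_, ?_⟩
    · refine le_trans (le_of_eq ?_) (hw x y)
      congr 1
      simp
    · change jM F₁ F₂ μ₁ μ₂ φ1 φ2 - D - ε / 2 < _
      linarith
  have h3 := hL _ _ hA
  rw [map_add, map_smul, smul_eq_mul] at h3
  have h4 : δ * L 1 ≤ ε / 2 := by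
    rw [hδ, div_mul_eq_mul_div, div_le_div_iff₀ (by positivity) (by positivity)]
    nlinarith
  linarith

end Dual

section Final

variable {X : Set ℝ} [CompactSpace ↥X] [StandardBorelSpace ↥X] [Nonempty ↥X]
  {c : ↥X → ↥X → EReal} {F₁ F₂ : EntropyFn} {μ₁ μ₂ : Measure ↥X}
  [IsFiniteMeasure μ₁] [IsFiniteMeasure μ₂] {D : ℝ}

lemma int_fst (γ : Measure (↥X × ↥X)) {φ : ↥X → ℝ} (h : Continuous φ) :
    ∫ x, φ x ∂γ.fst = ∫ q, φ q.1 ∂γ := by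
  rw [Measure.fst, integral_map measurable_fst.aemeasurable h.aestronglyMeasurable]

lemma int_snd (γ : Measure (↥X × ↥X)) {φ : ↥X → ℝ} (h : Continuous φ) :
    ∫ x, φ x ∂γ.snd = ∫ q, φ q.2 ∂γ := by
  rw [Measure.snd, integral_map measurable_snd.aemeasurable h.aestronglyMeasurable]

lemma int_aff (γ : Measure (↥X × ↥X)) [IsFiniteMeasure γ] {φ1 φ2 h : ↥X → ℝ}
    (h1 : Continuous φ1) (h2 : Continuous φ2) (h3 : Continuous h) :
    ∫ q, (φ1 q.1 + φ2 q.2 + h q.1 * ((q.2 : ℝ) - (q.1 : ℝ))) ∂γ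
      = ∫ x, φ1 x ∂γ.fst + ∫ x, φ2 x ∂γ.snd + ∫ q, h q.1 * ((q.2 : ℝ) - (q.1 : ℝ)) ∂γ := by
  have i1 : Integrable (fun q : ↥X × ↥X => φ1 q.1) γ := cont_int (by fun_prop) γ
  have i2 : Integrable (fun q : ↥X × ↥X => φ2 q.2) γ := cont_int (by fun_prop) γ
  have i3 : Integrable (fun q : ↥X × ↥X => h q.1 * ((q.2 : ℝ) - (q.1 : ℝ))) γ :=
    cont_int (by fun_prop) γ
  have i12 : Integrable (fun q : ↥X × ↥X => φ1 q.1 + φ2 q.2) γ := i1.add i2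
  rw [int_fst γ h1, int_snd γ h2, integral_add i12 i3, integral_add i1 i2]

lemma primal_le {K : ℝ} (hK : ∀ x y, (K : EReal) ≤ c x y)
    (hlsc : LowerSemicontinuous fun q : ↥X × ↥X => c q.1 q.2) (h01 : (0:ℝ) ∈ F₁.I)
    (h02 : ∀ t : ℝ, t ∈ F₂.I)
    (hD : ∀ φ1 φ2 h : C(↥X, ℝ), (∀ x, φ1 x ∈ F₁.I) → (∀ x, φ2 x ∈ F₂.I) →
      (∀ x y, ((affM φ1 φ2 h x y : ℝ) : EReal) ≤ c x y) → jM F₁ F₂ μ₁ μ₂ φ1 φ2 ≤ D) :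
    eMart c F₁ F₂ μ₁ μ₂ ≤ (D : EReal) := by
  obtain ⟨L, hLp, hL⟩ := hb_dual hK h01 h02 hD
  obtain ⟨γ, hγ, hLγ⟩ := rmk_exists L hLp
  have key : ∀ φ1 φ2 h : ↥X → ℝ, Continuous φ1 → Continuous φ2 → Continuous h →
      (∀ x, φ1 x ∈ F₁.I) → ∀ g : ↥X × ↥X → ℝ, Continuous g →
      (∀ z, (g z : EReal) ≤ c z.1 z.2) →
      ∫ x, F₁.G (φ1 x) ∂μ₁ + ∫ x, F₂.G (φ2 x) ∂μ₂ ≤ D + (∫ x, φ1 x ∂γ.fst + ∫ x, φ2 x ∂γ.snd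
        + ∫ q, h q.1 * ((q.2 : ℝ) - (q.1 : ℝ)) ∂γ) - ∫ z, g z ∂γ := by
    intro φ1 φ2 h c1 c2 c3 hI g cg hg
    have ca : Continuous (fun q : ↥X × ↥X => φ1 q.1 + φ2 q.2 + h q.1 * ((q.2 : ℝ) - (q.1 : ℝ))) := by
      fun_prop
    have h1 := hL ⟨φ1, c1⟩ ⟨φ2, c2⟩ ⟨h, c3⟩ hI (fun x => h02 _)
      ⟨fun q => φ1 q.1 + φ2 q.2 + h q.1 * ((q.2 : ℝ) - (q.1 : ℝ)) - g q, ca.sub cg⟩ (fun x y => by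
        refine le_trans (le_of_eq ?_) (hg (x, y))
        congr 1
        simp [affM])
    rw [hLγ] at h1
    simp only [ContinuousMap.coe_mk, jM] at h1
    rw [integral_sub (cont_int ca γ) (cont_int cg γ), int_aff γ c1 c2 c3] at h1
    linarith
  have hm : martCond γ hγ := by
    refine mart_of γ hγ fun h hh => ?_
    set M := ∫ q, h q.1 * ((q.2 : ℝ) - (q.1 : ℝ)) ∂γ with hM
    have h1 : ∀ l : ℝ, ∫ x, F₁.G 0 ∂μ₁ + ∫ x, F₂.G 0 ∂μ₂ ≤ D + l * M - ∫ z, K ∂γ := by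
      intro l
      have := key (fun _ => 0) (fun _ => 0) (fun x => l * h x) continuous_const continuous_const
        (by fun_prop) (fun _ => h01) (fun _ => K) continuous_const (fun z => hK _ _)
      have e : ∫ q, l * h q.1 * ((q.2 : ℝ) - (q.1 : ℝ)) ∂γ = l * M := by
        rw [hM, ← integral_const_mul]
        congr 1; ext q; ring
      rw [e] at this
      simpa only [integral_zero, zero_add] using this
    by_contra hM0
    set R := ∫ x, F₁.G 0 ∂μ₁ + ∫ x, F₂.G 0 ∂μ₂ - D + ∫ z, K ∂γ with hR
    have h2 := h1 ((R - 1) / M)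
    rw [div_mul_cancel₀ _ hM0] at h2
    linarith
  have hmz : ∀ h : ↥X → ℝ, Continuous h → ∫ q, h q.1 * ((q.2 : ℝ) - (q.1 : ℝ)) ∂γ = 0 :=
    mart_to γ hγ hm
  have key2 : ∀ φ1 φ2 : ↥X → ℝ, Continuous φ1 → Continuous φ2 →
      (∀ x, φ1 x ∈ F₁.I) → ∀ g : ↥X × ↥X → ℝ, Continuous g →
      (∀ z, (g z : EReal) ≤ c z.1 z.2) →
      ∫ x, F₁.G (φ1 x) ∂μ₁ + ∫ x, F₂.G (φ2 x) ∂μ₂ ≤ D + (∫ x, φ1 x ∂γ.fst + ∫ x, φ2 x ∂γ.snd)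
        - ∫ z, g z ∂γ := by
    intro φ1 φ2 c1 c2 hI g cg hg
    have := key φ1 φ2 (fun _ => 0) c1 c2 continuous_const hI g cg hg
    simpa using this
  have s1 : ∀ φ2 : ↥X → ℝ, Continuous φ2 → ∀ g : ↥X × ↥X → ℝ, Continuous g →
      (∀ z, (g z : EReal) ≤ c z.1 z.2) → entF F₁ γ.fst μ₁ ≠ ⊤ ∧ (entF F₁ γ.fst μ₁).toReal ≤
        D + ∫ x, φ2 x ∂γ.snd - ∫ x, F₂.G (φ2 x) ∂μ₂ - ∫ z, g z ∂γ := by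
    intro φ2 c2 g cg hg
    refine entF_le F₁ h01 γ.fst μ₁ fun φ1 c1 hI => ?_
    have := key2 φ1 φ2 c1 c2 hI g cg hg
    linarith
  have s2 : ∀ g : ↥X × ↥X → ℝ, Continuous g →
      (∀ z, (g z : EReal) ≤ c z.1 z.2) → entF F₂ γ.snd μ₂ ≠ ⊤ ∧ (entF F₂ γ.snd μ₂).toReal ≤
        D - (entF F₁ γ.fst μ₁).toReal - ∫ z, g z ∂γ := by
    intro g cg hg
    refine entF_le F₂ (h02 0) γ.snd μ₂ fun φ2 c2 _ => ?_
    have := (s1 φ2 c2 g cg hg).2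
    linarith
  have s3 : eIntegral γ (fun q => c q.1 q.2) ≤
      ((D - (entF F₁ γ.fst μ₁).toReal - (entF F₂ γ.snd μ₂).toReal : ℝ) : EReal) := by
    refine eInt_le (K := K) (fun z => hK _ _) hlsc γ fun g cg hg => ?_
    have := (s2 g cg hg).2
    linarith
  have t1 := (s1 (fun _ => 0) continuous_const (fun _ => K) continuous_const (fun z => hK _ _)).1
  have t2 := (s2 (fun _ => K) continuous_const (fun z => hK _ _)).1
  refine le_trans (sInf_le ⟨γ, hγ, hm, rfl⟩) ?_
  refine le_trans (add_le_add le_rfl s3) ?_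
  rw [← EReal.coe_ennreal_toReal t1, ← EReal.coe_ennreal_toReal t2, ← EReal.coe_add,
    ← EReal.coe_add, EReal.coe_le_coe_iff]
  linarith

lemma eInt_circ (F : EntropyFn) (μ : Measure ↥X) [IsFiniteMeasure μ] {φ : ↥X → ℝ}
    (hc : Continuous φ) (hφ : ∀ x, φ x ∈ F.I) :
    eIntegral μ (fun x => F.circ (φ x)) = ((∫ x, F.G (φ x) ∂μ : ℝ) : EReal) := by
  rw [← eInt_coe (cont_int (cont_G F hc hφ) μ)]
  congr 1
  ext x
  exact F.circ_eq (F.I_sub (hφ x))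

lemma weak_dual (φ1 φ2 h : ↥X →ᵇ ℝ) (h1 : ∀ x, φ1 x ∈ F₁.I) (h2 : ∀ x, φ2 x ∈ F₂.I)
    (hc : ∀ x₁ x₂ : ↥X, ((φ1 x₁ + φ2 x₂ + h x₁ * ((x₂ : ℝ) - (x₁ : ℝ)) : ℝ) : EReal) ≤ c x₁ x₂)
    (γ : Measure (↥X × ↥X)) (hγ : IsFiniteMeasure γ) (hm : martCond γ hγ) :
    ((∫ x, F₁.G (φ1 x) ∂μ₁ : ℝ) : EReal) + ((∫ x, F₂.G (φ2 x) ∂μ₂ : ℝ) : EReal) ≤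
      ((entF F₁ γ.fst μ₁ : ℝ≥0∞) : EReal) + ((entF F₂ γ.snd μ₂ : ℝ≥0∞) : EReal) +
        eIntegral γ (fun q => c q.1 q.2) := by
  have aux : ∀ (r : ℝ) (a : ℝ≥0∞), ENNReal.ofReal r ≤ a → (r : EReal) ≤ (a : EReal) := by
    intro r a h
    refine le_trans ?_ (EReal.coe_ennreal_le_coe_ennreal_iff.2 h)
    rw [EReal.coe_ennreal_ofReal, EReal.coe_le_coe_iff]
    exact le_max_left _ _
  have e1 := aux _ _ (entF_ge F₁ γ.fst μ₁ φ1.continuous h1)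
  have e2 := aux _ _ (entF_ge F₂ γ.snd μ₂ φ2.continuous h2)
  have ca : Continuous (fun q : ↥X × ↥X => φ1 q.1 + φ2 q.2 + h q.1 * ((q.2 : ℝ) - (q.1 : ℝ))) := by
    fun_prop
  have e3 : ((∫ q, (φ1 q.1 + φ2 q.2 + h q.1 * ((q.2 : ℝ) - (q.1 : ℝ))) ∂γ : ℝ) : EReal)
      ≤ eIntegral γ (fun q => c q.1 q.2) := by
    rw [← eInt_coe (cont_int ca γ)]
    exact eInt_mono γ fun q => hc q.1 q.2
  rw [int_aff γ φ1.continuous φ2.continuous h.continuous, mart_to γ hγ hm h h.continuous] at e3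
  refine le_trans ?_ (add_le_add (add_le_add e1 e2) e3)
  rw [← EReal.coe_add, ← EReal.coe_add, ← EReal.coe_add, EReal.coe_le_coe_iff]
  linarith

end Final


theorem stmt17 (X : Set ℝ) (hXc : IsCompact X) (hXne : X.Nonempty)
    (c : ↥X → ↥X → EReal)
    (hlsc : LowerSemicontinuous fun q : ↥X × ↥X => c q.1 q.2)
    (hbdd : ∃ K : ℝ, ∀ x y, (K : EReal) ≤ c x y)
    (F₁ F₂ : EntropyFn) (hF₁ : 0 < F₁.recC) (hF₂ : F₂.Superlinear)
    (μ₁ μ₂ : Measure ↥X) (hμ₁ : IsFiniteMeasure μ₁) (hμ₂ : IsFiniteMeasure μ₂) :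
    haveI : Nonempty ↥X := hXne.to_subtype
    haveI : PolishSpace ↥X := hXc.isClosed.polishSpace
    (∃ (γ : Measure (↥X × ↥X)) (hγ : IsFiniteMeasure γ), martCond γ hγ ∧
        ((entF F₁ γ.fst μ₁ : ℝ≥0∞) : EReal) + ((entF F₂ γ.snd μ₂ : ℝ≥0∞) : EReal) +
          eIntegral γ (fun q => c q.1 q.2) < ⊤) →
    eMart c F₁ F₂ μ₁ μ₂
      = sSup { e : EReal | ∃ φ ∈ lamM c F₁ F₂,
          e = eIntegral μ₁ (fun x => F₁.circ (φ.1 x)) +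
              eIntegral μ₂ (fun x => F₂.circ (φ.2 x)) } := by
  intro _
  haveI : Nonempty ↥X := hXne.to_subtype
  haveI : PolishSpace ↥X := hXc.isClosed.polishSpace
  haveI : CompactSpace ↥X := isCompact_iff_compactSpace.1 hXc
  obtain ⟨K, hK⟩ := hbdd
  apply le_antisymm
  · refine EReal.le_of_forall_lt_iff_le.1 fun D hD => ?_
    refine primal_le hK hlsc (F₁.zero_mem_I hF₁) (F₂.I_univ hF₂) fun φ1 φ2 h h1 h2 hc => ?_
    rw [← EReal.coe_le_coe_iff]
    refine le_trans (le_sSup ?_) hD.le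
    refine ⟨(BoundedContinuousFunction.mkOfCompact φ1, BoundedContinuousFunction.mkOfCompact φ2),
      ⟨h1, h2, BoundedContinuousFunction.mkOfCompact h, hc⟩, ?_⟩
    have e1 := eInt_circ F₁ μ₁ φ1.continuous h1
    have e2 := eInt_circ F₂ μ₂ φ2.continuous h2
    simp only [BoundedContinuousFunction.mkOfCompact_apply]
    rw [e1, e2, ← EReal.coe_add, jM]
  · refine sSup_le ?_
    rintro e ⟨⟨φ1, φ2⟩, ⟨h1, h2, h, hc⟩, rfl⟩
    refine le_sInf ?_
    rintro e ⟨γ, hγ, hm, rfl⟩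
    rw [eInt_circ F₁ μ₁ φ1.continuous h1, eInt_circ F₂ μ₂ φ2.continuous h2]
    exact weak_dual φ1 φ2 h h1 h2 hc γ hγ hm
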